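/- arXiv:2304.04373 — 2 statements merged into one kernel-verified Lean document; each statement's English description precedes it below -/
import Mathlib

section
/- Let -∞ < a < b < ∞, 1 < p < ∞ with conjugate exponent p' = p/(p−1), let μ and w be weights on [a,b], and let Φ be a Young function that is submultiplicative and invertible on [0,∞) such that Λ(t) = Φ(t^{1/p}) is convex. Define S := sup_{a<x<b} { [Φ^{-1}(μ[x,b]^{-1/2})]^{-2} · (∫_a^x w(t)^{1−p'} dt)^{1/p'} }. If S < ∞, then for every f ∈ L_w^p[a,b], ‖ x ↦ ∫_a^x f(t) dt ‖_{L_μ^Φ[a,b]} ≤ C₀(Φ) · S · ‖f‖_{L_w^p[a,b]}, where C₀(Φ) := 2·[Φ^{-1}(1/2)]^{-1}. -/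
open MeasureTheory Set Filter
open scoped ENNReal NNReal

noncomputable section

/-- A Young function: even, convex, vanishing at `0`, nonnegative, tending to `∞`. -/
def IsYoung (Φ : ℝ → ℝ) : Prop :=
  ConvexOn ℝ Set.univ Φ ∧ (∀ t, Φ (-t) = Φ t) ∧ Φ 0 = 0 ∧ (∀ t, 0 ≤ Φ t) ∧
    Filter.Tendsto Φ Filter.atTop Filter.atTop

/-- A weight on `[a,b]`: nonnegative, measurable, positive a.e. on `[a,b]`. -/
def IsWeight (w : ℝ → ℝ) (a b : ℝ) : Prop :=
  Measurable w ∧ (∀ x, 0 ≤ w x) ∧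
    ∀ᵐ x ∂(MeasureTheory.volume.restrict (Set.Icc a b)), 0 < w x

/-- `Φ` is submultiplicative on `[0,∞)`. -/
def Submult (Φ : ℝ → ℝ) : Prop :=
  ∀ s t : ℝ, 0 ≤ s → 0 ≤ t → Φ (s * t) ≤ Φ s * Φ t

/-- `Φinv` is the inverse of `Φ` restricted to `[0,∞)`. -/
def IsYoungInv (Φ Φinv : ℝ → ℝ) : Prop :=
  (∀ t, 0 ≤ t → 0 ≤ Φinv t) ∧ (∀ t, 0 ≤ t → Φ (Φinv t) = t) ∧
    (∀ t, 0 ≤ t → Φinv (Φ t) = t)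

/-- `μ[x,y] := ∫ₓ^y μ(t) dt`, as an extended nonnegative real. -/
def wInt (μ : ℝ → ℝ) (x y : ℝ) : ℝ≥0∞ :=
  ∫⁻ t in Set.Icc x y, ENNReal.ofReal (μ t)

/-- The Luxemburg (gauge) norm of `f` on `[a,b]` w.r.t. the Young function `Φ`
and the weight `μ`: `inf {k > 0 : ∫ₐ^b Φ(f/k) μ ≤ 1}` (`∞` if no such `k`). -/
def luxNorm (Φ μ : ℝ → ℝ) (a b : ℝ) (f : ℝ → ℝ) : ℝ≥0∞ :=
  sInf {k : ℝ≥0∞ | ∃ c : ℝ, 0 < c ∧ k = ENNReal.ofReal c ∧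
    (∫⁻ x in Set.Icc a b, ENNReal.ofReal (Φ (f x / c) * μ x)) ≤ 1}

/-- `f` is Lipschitz on `[a,b]` and `f'` is a.e. its derivative on `(a,b)`. -/
def LipschitzWithDeriv (f f' : ℝ → ℝ) (a b : ℝ) : Prop :=
  (∃ K, LipschitzOnWith K f (Set.Icc a b)) ∧
    ∀ᵐ x ∂(MeasureTheory.volume.restrict (Set.Ioo a b)), HasDerivAt f (f' x) x

/-- The weighted `L^p` norm `(∫ₐ^b |g|^p w)^{1/p}`, as an extended nonnegative real. -/
def lpNorm (w : ℝ → ℝ) (p a b : ℝ) (g : ℝ → ℝ) : ℝ≥0∞ :=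
  (∫⁻ t in Set.Icc a b, ENNReal.ofReal (|g t| ^ p * w t)) ^ (1 / p)

/-- The Luxemburg (gauge) norm on a general measure space. -/
def luxNormGen {Ω : Type*} [MeasurableSpace Ω] (Φ : ℝ → ℝ) (μ : Measure Ω)
    (f : Ω → ℝ) : ℝ≥0∞ :=
  sInf {k : ℝ≥0∞ | ∃ c : ℝ, 0 < c ∧ k = ENNReal.ofReal c ∧
    (∫⁻ x, ENNReal.ofReal (Φ (f x / c)) ∂μ) ≤ 1}

/-- The Luxemburg (gauge) norm for an extended-real-valued Young function. -/
def luxNormE {Ω : Type*} [MeasurableSpace Ω] (Ψ : ℝ → ℝ≥0∞) (μ : Measure Ω)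
    (f : Ω → ℝ) : ℝ≥0∞ :=
  sInf {k : ℝ≥0∞ | ∃ c : ℝ, 0 < c ∧ k = ENNReal.ofReal c ∧
    (∫⁻ x, Ψ (f x / c) ∂μ) ≤ 1}

/-!
Write `M x` for the `μ`-mass to the right of `x`, `V x` for the mass of `w ^ (1 - p')` to the left
of `x`, and `Q x = Φ⁻¹(M x ^ (-1/2))`, so that the hypothesis reads `V x ^ (1/p') ≤ S * Q x ^ 2`.
Hölder's inequality with the weight `V ^ (1/(2p'))` and the bound
`∫_a^x V ^ (-1/2) dV ≤ 2 V(x)^(1/2)` turn `∫_a^x f` into the `L^p` mean of the kernel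
`2 S Q(x) Q(t)` against `|f|^p w dt`. After normalising `f`, this measure has mass at most one, and
the constant `C₀(Φ)` is chosen so that the kernel becomes `Φ⁻¹(1/2) Q(x) Q(t)`. Jensen's inequality
for the convex function `Λ` moves `Φ` inside the mean, submultiplicativity bounds `Φ` of the kernel
by `M(x)^(-1/2) M(t)^(-1/2) / 2`, and Tonelli's theorem together with
`∫_t^b M ^ (-1/2) dμ ≤ 2 M(t)^(1/2)` shows that the modular is at most one.

The two integral bounds hold for arbitrary Borel measures: the superlevel set
`{x | s < M x ^ (-1/2)}` has measure at most `s ^ (-2)`, so the layer-cake formula replaces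
differentiation of `M`.
-/

section Convexity

theorem exists_slope_forall_add_mul_sub_le {L : ℝ → ℝ} (hL : ConvexOn ℝ univ L) (y : ℝ) :
    ∃ m, ∀ s, L y + m * (s - y) ≤ L s := by
  have hy : y ∈ interior univ := by simp
  refine ⟨derivWithin L (Ioi y) y, fun s ↦ ?_⟩
  rcases lt_trichotomy s y with hs | rfl | hs
  · have hslope := (hL.slope_le_leftDeriv_of_mem_interior (mem_univ s) hy hs).trans
      (hL.leftDeriv_le_rightDeriv_of_mem_interior hy)
    rw [slope_def_field, div_le_iff₀ (sub_pos.2 hs)] at hslope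
    linarith
  · simp
  · have hslope := hL.rightDeriv_le_slope_of_mem_interior hy (mem_univ s) hs
    rw [slope_def_field, le_div_iff₀ (sub_pos.2 hs)] at hslope
    linarith

theorem ofReal_apply_le_lintegral_of_convexOn {α : Type*} [MeasurableSpace α] {P : Measure α}
    (hP : P univ ≤ 1) {L : ℝ → ℝ} (hL : ConvexOn ℝ univ L) (hL0 : L 0 = 0)
    (hL_nonneg : ∀ s, 0 ≤ L s) {u : α → ℝ} {y : ℝ} (hy : 0 ≤ y)
    (hyu : ENNReal.ofReal y ≤ ∫⁻ t, ENNReal.ofReal (u t) ∂P) :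
    ENNReal.ofReal (L y) ≤ ∫⁻ t, ENNReal.ofReal (L (u t)) ∂P := by
  obtain rfl | hy := hy.eq_or_lt
  · simp [hL0]
  -- Since `L 0 = 0`, the supporting line at `y` has intercept `-d ≤ 0`, so a defect of mass helps.
  obtain ⟨m, hm⟩ := exists_slope_forall_add_mul_sub_le hL y
  have hm_le : L y ≤ m * y := by linarith [hm 0]
  have hm0 : 0 ≤ m := nonneg_of_mul_nonneg_left ((hL_nonneg y).trans hm_le) hy
  have hd : 0 ≤ m * y - L y := sub_nonneg.2 hm_le
  set d := m * y - L y with hd_def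
  have hline (s : ℝ) :
      ENNReal.ofReal m * ENNReal.ofReal s ≤ ENNReal.ofReal (L s) + ENNReal.ofReal d := by
    rw [← ENNReal.ofReal_mul hm0, ← ENNReal.ofReal_add (hL_nonneg s) hd]
    exact ENNReal.ofReal_le_ofReal (by linarith [hm s])
  refine (ENNReal.add_le_add_iff_right (ENNReal.ofReal_ne_top (r := d))).1 ?_
  calc ENNReal.ofReal (L y) + ENNReal.ofReal d
      = ENNReal.ofReal m * ENNReal.ofReal y := by
        rw [← ENNReal.ofReal_mul hm0, ← ENNReal.ofReal_add (hL_nonneg y) hd, hd_def, add_sub_cancel]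
    _ ≤ ENNReal.ofReal m * ∫⁻ t, ENNReal.ofReal (u t) ∂P := by gcongr
    _ ≤ ∫⁻ t, ENNReal.ofReal m * ENNReal.ofReal (u t) ∂P := lintegral_const_mul_le _ _
    _ ≤ ∫⁻ t, (ENNReal.ofReal (L (u t)) + ENNReal.ofReal d) ∂P :=
        lintegral_mono fun t ↦ hline (u t)
    _ = (∫⁻ t, ENNReal.ofReal (L (u t)) ∂P) + ENNReal.ofReal d * P univ := by
        rw [lintegral_add_right _ measurable_const, lintegral_const]
    _ ≤ (∫⁻ t, ENNReal.ofReal (L (u t)) ∂P) + ENNReal.ofReal d := by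
        gcongr
        exact mul_le_of_le_one_right' hP

theorem ofReal_apply_le_lintegral_of_convexOn_rpow {α : Type*} [MeasurableSpace α] {P : Measure α}
    (hP : P univ ≤ 1) {Φ : ℝ → ℝ} {p : ℝ} (hp : 0 < p) (hΦ0 : Φ 0 = 0) (hΦ_nonneg : ∀ t, 0 ≤ Φ t)
    (hΛ : ConvexOn ℝ univ fun t ↦ Φ (|t| ^ (1 / p))) {k : α → ℝ} (hk : ∀ t, 0 ≤ k t) {y : ℝ}
    (hy : 0 ≤ y) (hyk : ENNReal.ofReal y ^ p ≤ ∫⁻ t, ENNReal.ofReal (k t) ^ p ∂P) :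
    ENNReal.ofReal (Φ y) ≤ ∫⁻ t, ENNReal.ofReal (Φ (k t)) ∂P := by
  have hroot {s : ℝ} (hs : 0 ≤ s) : |s ^ p| ^ (1 / p) = s := by
    rw [abs_of_nonneg (by positivity), one_div, Real.rpow_rpow_inv hs hp.ne']
  have hjensen := ofReal_apply_le_lintegral_of_convexOn hP hΛ (u := fun t ↦ k t ^ p) (y := y ^ p)
    (by simp [hp.ne', hΦ0]) (fun _ ↦ hΦ_nonneg _) (by positivity)
    (by simpa only [ENNReal.ofReal_rpow_of_nonneg, hy, hk, hp.le] using hyk)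
  simpa only [hroot, hy, hk] using hjensen

end Convexity

section Young

variable {α : Type*} {Φ Φinv : ℝ → ℝ}

theorem IsYoungInv.pos (hinv : IsYoungInv Φ Φinv) (hΦ0 : Φ 0 = 0) {t : ℝ} (ht : 0 < t) :
    0 < Φinv t := by
  refine (hinv.1 t ht.le).lt_of_ne' fun h0 ↦ ht.ne ?_
  rw [← hinv.2.1 t ht.le, h0, hΦ0]

theorem Submult.apply_inv_mul_inv_mul_inv_le (hsub : Submult Φ) (hinv : IsYoungInv Φ Φinv)
    (hΦ_nonneg : ∀ t, 0 ≤ Φ t) {r s t : ℝ} (hr : 0 ≤ r) (hs : 0 ≤ s) (ht : 0 ≤ t) :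
    Φ (Φinv r * Φinv s * Φinv t) ≤ r * s * t := by
  obtain ⟨hinv_nonneg, hright, -⟩ := hinv
  have hr' := hinv_nonneg r hr
  have hs' := hinv_nonneg s hs
  calc Φ (Φinv r * Φinv s * Φinv t)
      ≤ Φ (Φinv r * Φinv s) * Φ (Φinv t) := hsub _ _ (mul_nonneg hr' hs') (hinv_nonneg t ht)
    _ ≤ Φ (Φinv r) * Φ (Φinv s) * Φ (Φinv t) := by
        gcongr
        · exact hΦ_nonneg _
        · exact hsub _ _ hr' hs'
    _ = r * s * t := by rw [hright r hr, hright s hs, hright t ht]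

theorem luxNormGen_le_of_forall [MeasurableSpace α] {ν : Measure α} {F : α → ℝ} {K : ℝ≥0∞}
    (h : ∀ c : ℝ, 0 < c → K ≤ ENNReal.ofReal c → ∫⁻ x, ENNReal.ofReal (Φ (F x / c)) ∂ν ≤ 1) :
    luxNormGen Φ ν F ≤ K := by
  refine ENNReal.le_of_forall_pos_le_add fun ε hε hK ↦ sInf_le ?_
  have hc : ENNReal.ofReal (K.toReal + (ε : ℝ)) = K + ε := by
    rw [ENNReal.ofReal_add ENNReal.toReal_nonneg ε.coe_nonneg, ENNReal.ofReal_toReal hK.ne,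
      ENNReal.ofReal_coe_nnreal]
  have hc0 : 0 < K.toReal + (ε : ℝ) := add_pos_of_nonneg_of_pos ENNReal.toReal_nonneg hε
  exact ⟨_, hc0, hc.symm, h _ hc0 (hc ▸ le_self_add)⟩

/-- The factor `Φ⁻¹(ν[x,∞)^{-1/2})` in the definition of `S`. Infinite tails are mapped to `Φ⁻¹(0)`
as they should be, because `(∞ : ℝ≥0∞).toReal = 0` and `(0 : ℝ) ^ (-1/2) = 0`; for a null tail
`Φ⁻¹(0)` is a junk value, the intended one being `Φ⁻¹(∞)`. -/
def invTail [Preorder α] [MeasurableSpace α] (Φinv : ℝ → ℝ) (ν : Measure α) (x : α) : ℝ :=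
  Φinv ((ν (Ici x)).toReal ^ (-(1 / 2) : ℝ))

theorem IsYoungInv.invTail_nonneg [Preorder α] [MeasurableSpace α] (hinv : IsYoungInv Φ Φinv)
    (ν : Measure α) (x : α) : 0 ≤ invTail Φinv ν x :=
  hinv.1 _ (by positivity)

theorem ofReal_apply_mul_invTail_le [Preorder α] [MeasurableSpace α] (hΦ : ∀ t, 0 ≤ Φ t)
    (hsub : Submult Φ) (hinv : IsYoungInv Φ Φinv) (ν : Measure α) (x t : α) :
    ENNReal.ofReal (Φ (Φinv (1 / 2) * invTail Φinv ν t * invTail Φinv ν x)) ≤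
      2⁻¹ * (ν (Ici t) ^ (-(1 / 2) : ℝ) * ν (Ici x) ^ (-(1 / 2) : ℝ)) := by
  have hhalf : ENNReal.ofReal (1 / 2) = 2⁻¹ := by simp [ENNReal.ofReal_inv_of_pos]
  have hofReal (y : α) : ENNReal.ofReal ((ν (Ici y)).toReal ^ (-(1 / 2) : ℝ)) ≤
      ν (Ici y) ^ (-(1 / 2) : ℝ) := by
    rw [ENNReal.toReal_rpow]
    exact ENNReal.ofReal_toReal_le
  refine (ENNReal.ofReal_le_ofReal (hsub.apply_inv_mul_inv_mul_inv_le hinv hΦ (by positivity)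
    (by positivity) (by positivity))).trans ?_
  rw [mul_assoc, ENNReal.ofReal_mul (by positivity), ENNReal.ofReal_mul (by positivity), hhalf]
  gcongr
  exacts [hofReal t, hofReal x]

end Young

theorem lintegral_Ioi_rpow_neg_two {T : ℝ} (hT : 0 < T) :
    ∫⁻ s in Ioi T, ENNReal.ofReal (s ^ (-2 : ℝ)) = ENNReal.ofReal T⁻¹ := by
  rw [← ofReal_integral_eq_lintegral_ofReal (integrableOn_Ioi_rpow_of_lt (by norm_num) hT)
    (ae_restrict_of_forall_mem measurableSet_Ioi fun s hs ↦ Real.rpow_nonneg (hT.trans hs).le _),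
    integral_Ioi_rpow_of_lt (by norm_num) hT]
  norm_num [Real.rpow_neg_one]

section OrderedSpace

variable {α : Type*} [LinearOrder α] [TopologicalSpace α] [OrderTopology α] [MeasurableSpace α]

theorem measurable_measure_Ici [BorelSpace α] (ν : Measure α) : Measurable fun x ↦ ν (Ici x) :=
  Antitone.measurable fun _ _ h ↦ measure_mono (Ici_subset_Ici.2 h)

theorem measurable_measure_Iic [BorelSpace α] (ν : Measure α) : Measurable fun x ↦ ν (Iic x) :=
  Monotone.measurable fun _ _ h ↦ measure_mono (Iic_subset_Iic.2 h)

variable [SecondCountableTopology α]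

theorem measure_le_of_forall_measure_Ici_le (ν : Measure α) {U : Set α} {r : ℝ≥0∞}
    (hr : ∀ x ∈ U, ν (Ici x) ≤ r) : ν U ≤ r := by
  by_cases hmin : ∃ m ∈ U, ∀ x ∈ U, m ≤ x
  · obtain ⟨m, hm, hle⟩ := hmin
    exact (measure_mono hle).trans (hr m hm)
  push Not at hmin
  obtain ⟨T, hTU, hT, hTeq⟩ :=
    TopologicalSpace.isOpen_biUnion_countable U Ioi fun _ _ ↦ isOpen_Ioi
  have hcover : U ⊆ ⋃ x ∈ T, Ioi x := fun x hx ↦ by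
    obtain ⟨y, hy, hyx⟩ := hmin x hx
    exact hTeq ▸ mem_biUnion hy hyx
  have hdir : DirectedOn (Function.onFun (· ⊆ ·) Ioi) T := fun x hx y hy ↦
    (le_total x y).elim (fun h ↦ ⟨x, hx, Subset.rfl, Ioi_subset_Ioi h⟩)
      fun h ↦ ⟨y, hy, Ioi_subset_Ioi h, Subset.rfl⟩
  calc ν U ≤ ν (⋃ x ∈ T, Ioi x) := measure_mono hcover
    _ = ⨆ x ∈ T, ν (Ioi x) := measure_biUnion_eq_iSup hT hdir
    _ ≤ r := iSup₂_le fun x hx ↦ (measure_mono Ioi_subset_Ici_self).trans (hr x (hTU hx))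

theorem ae_measure_Ici_ne_zero (ν : Measure α) : ∀ᵐ x ∂ν, ν (Ici x) ≠ 0 := by
  have hnull : ν {x | ν (Ici x) = 0} ≤ 0 := measure_le_of_forall_measure_Ici_le ν fun _ ↦ Eq.le
  simpa only [ne_eq, ae_iff, not_not] using le_antisymm hnull zero_le

theorem ae_measure_Iic_ne_zero (ν : Measure α) : ∀ᵐ x ∂ν, ν (Iic x) ≠ 0 :=
  ae_measure_Ici_ne_zero (α := αᵒᵈ) ν

theorem measure_setOf_lt_measure_Ici_rpow_neg_half_le (ν : Measure α) {s : ℝ} (hs : 0 < s) :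
    ν {x | s < (ν (Ici x) ^ (-(1 / 2) : ℝ)).toReal} ≤ ENNReal.ofReal (s ^ (-2 : ℝ)) := by
  refine measure_le_of_forall_measure_Ici_le ν fun x (hx : s < _) ↦ ?_
  have hlt : ENNReal.ofReal s ≤ ν (Ici x) ^ (-(1 / 2) : ℝ) :=
    (ENNReal.ofReal_le_ofReal hx.le).trans ENNReal.ofReal_toReal_le
  calc ν (Ici x) = (ν (Ici x) ^ (-(1 / 2) : ℝ)) ^ (-2 : ℝ) := by
        rw [← ENNReal.rpow_mul]; norm_num
    _ ≤ ENNReal.ofReal s ^ (-2 : ℝ) := by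
        rw [ENNReal.rpow_neg _ 2, ENNReal.rpow_neg _ 2]
        exact ENNReal.inv_le_inv.2 (ENNReal.rpow_le_rpow hlt zero_le_two)
    _ = ENNReal.ofReal (s ^ (-2 : ℝ)) := ENNReal.ofReal_rpow_of_pos hs

variable [BorelSpace α]

theorem lintegral_measure_Ici_rpow_neg_half_le_add (ν : Measure α) {T : ℝ} (hT : 0 < T) :
    ∫⁻ x, ν (Ici x) ^ (-(1 / 2) : ℝ) ∂ν ≤ ENNReal.ofReal T * ν univ + (ENNReal.ofReal T)⁻¹ := by
  calc ∫⁻ x, ν (Ici x) ^ (-(1 / 2) : ℝ) ∂ν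
      = ∫⁻ x, ENNReal.ofReal (ν (Ici x) ^ (-(1 / 2) : ℝ)).toReal ∂ν := by
        refine lintegral_congr_ae ?_
        filter_upwards [ae_measure_Ici_ne_zero ν] with x hx
        rw [ENNReal.ofReal_toReal]
        simp [ENNReal.rpow_eq_top_iff, hx]
    _ = ∫⁻ s in Ioi 0, ν {x | s < (ν (Ici x) ^ (-(1 / 2) : ℝ)).toReal} :=
        lintegral_eq_lintegral_meas_lt ν (ae_of_all _ fun _ ↦ ENNReal.toReal_nonneg)
          ((measurable_measure_Ici ν).pow_const _).ennreal_toReal.aemeasurable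
    _ ≤ (∫⁻ _ in Ioc 0 T, ν univ) + ∫⁻ s in Ioi T, ENNReal.ofReal (s ^ (-2 : ℝ)) := by
        rw [← Ioc_union_Ioi_eq_Ioi hT.le]
        refine (lintegral_union_le _ _ _).trans (add_le_add ?_ ?_)
        · exact lintegral_mono fun _ ↦ measure_mono (subset_univ _)
        · exact setLIntegral_mono' measurableSet_Ioi fun s hs ↦
            measure_setOf_lt_measure_Ici_rpow_neg_half_le ν (hT.trans hs)
    _ = ENNReal.ofReal T * ν univ + (ENNReal.ofReal T)⁻¹ := by
        rw [setLIntegral_const, Real.volume_Ioc, sub_zero, mul_comm,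
          lintegral_Ioi_rpow_neg_two hT, ENNReal.ofReal_inv_of_pos hT]

theorem lintegral_measure_Ici_rpow_neg_half_le (ν : Measure α) :
    ∫⁻ x, ν (Ici x) ^ (-(1 / 2) : ℝ) ∂ν ≤ 2 * ν univ ^ (1 / 2 : ℝ) := by
  rcases eq_or_ne (ν univ) 0 with h0 | h0
  · simp [Measure.measure_univ_eq_zero.1 h0]
  rcases eq_or_ne (ν univ) ∞ with htop | htop
  · simp [htop]
  have hne_top : ν univ ^ (-(1 / 2) : ℝ) ≠ ∞ := ENNReal.rpow_ne_top_of_ne_zero h0 htop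
  have hpos : 0 < ν univ ^ (-(1 / 2) : ℝ) := ENNReal.rpow_pos (pos_iff_ne_zero.2 h0) htop
  refine (lintegral_measure_Ici_rpow_neg_half_le_add ν
    (ENNReal.toReal_pos hpos.ne' hne_top)).trans_eq ?_
  have hhead : ν univ ^ (-(1 / 2) : ℝ) * ν univ = ν univ ^ (1 / 2 : ℝ) := by
    nth_rw 2 [← ENNReal.rpow_one (ν univ)]
    rw [← ENNReal.rpow_add _ _ h0 htop]
    norm_num
  rw [ENNReal.ofReal_toReal hne_top, hhead, ENNReal.rpow_neg, inv_inv, two_mul]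

theorem setLIntegral_measure_Ici_rpow_neg_half_le (ν : Measure α) (t : α) :
    ∫⁻ x in Ici t, ν (Ici x) ^ (-(1 / 2) : ℝ) ∂ν ≤ 2 * ν (Ici t) ^ (1 / 2 : ℝ) := by
  calc ∫⁻ x in Ici t, ν (Ici x) ^ (-(1 / 2) : ℝ) ∂ν
      = ∫⁻ x in Ici t, (ν.restrict (Ici t)) (Ici x) ^ (-(1 / 2) : ℝ) ∂ν :=
        setLIntegral_congr_fun measurableSet_Ici fun x (hx : t ≤ x) ↦ by
          simp only [Measure.restrict_apply measurableSet_Ici, Ici_inter_Ici, max_eq_left hx]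
    _ ≤ 2 * ν (Ici t) ^ (1 / 2 : ℝ) := by
        simpa only [Measure.restrict_apply_univ] using
          lintegral_measure_Ici_rpow_neg_half_le (ν.restrict (Ici t))

theorem setLIntegral_measure_Iic_rpow_neg_half_le (ν : Measure α) (x : α) :
    ∫⁻ t in Iic x, ν (Iic t) ^ (-(1 / 2) : ℝ) ∂ν ≤ 2 * ν (Iic x) ^ (1 / 2 : ℝ) :=
  setLIntegral_measure_Ici_rpow_neg_half_le (α := αᵒᵈ) ν x

theorem lintegral_setLIntegral_measure_Ici_rpow_neg_half_le (ν P : Measure α) [SFinite ν]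
    [SFinite P] :
    ∫⁻ x, ∫⁻ t in Iic x, ν (Ici t) ^ (-(1 / 2) : ℝ) * ν (Ici x) ^ (-(1 / 2) : ℝ) ∂P ∂ν
      ≤ 2 * P univ := by
  set h : α → ℝ≥0∞ := fun x ↦ ν (Ici x) ^ (-(1 / 2) : ℝ) with hdef
  have hmeas : Measurable h := (measurable_measure_Ici ν).pow_const _
  have hcancel (t : α) : h t * ν (Ici t) ^ (1 / 2 : ℝ) ≤ 1 := by
    simp only [hdef, ENNReal.rpow_neg]
    exact ENNReal.inv_mul_le_one _
  have hprod : Measurable fun z : α × α ↦ (Iic z.1).indicator (fun t ↦ h t * h z.1) z.2 :=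
    Measurable.ite (measurableSet_le measurable_snd measurable_fst)
      ((hmeas.comp measurable_snd).mul (hmeas.comp measurable_fst)) measurable_const
  calc ∫⁻ x, ∫⁻ t in Iic x, h t * h x ∂P ∂ν
      = ∫⁻ t, ∫⁻ x, (Iic x).indicator (fun t ↦ h t * h x) t ∂ν ∂P := by
        simp only [← lintegral_indicator measurableSet_Iic]
        exact lintegral_lintegral_swap hprod.aemeasurable
    _ = ∫⁻ t, h t * ∫⁻ x in Ici t, h x ∂ν ∂P := by
        refine lintegral_congr fun t ↦ ?_
        rw [← lintegral_const_mul _ hmeas, ← lintegral_indicator measurableSet_Ici]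
        rfl
    _ ≤ ∫⁻ _, 2 ∂P := by
        refine lintegral_mono fun t ↦ ?_
        calc h t * ∫⁻ x in Ici t, h x ∂ν ≤ h t * (2 * ν (Ici t) ^ (1 / 2 : ℝ)) := by
              gcongr
              exact setLIntegral_measure_Ici_rpow_neg_half_le ν t
          _ = 2 * (h t * ν (Ici t) ^ (1 / 2 : ℝ)) := by ring
          _ ≤ 2 := by simpa using mul_le_mul_right (hcancel t) 2
    _ = 2 * P univ := lintegral_const _

theorem setLIntegral_measure_Iic_rpow_neg_half_rpow_le (σ : Measure α) {q : ℝ} (hq : 1 ≤ q)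
    (x : α) :
    (∫⁻ t in Iic x, σ (Iic t) ^ (-(1 / 2) : ℝ) ∂σ) ^ (1 / q) ≤
      2 * σ (Iic x) ^ (1 / (2 * q)) := by
  have hq0 : 0 < q := one_pos.trans_le hq
  calc (∫⁻ t in Iic x, σ (Iic t) ^ (-(1 / 2) : ℝ) ∂σ) ^ (1 / q)
      ≤ (2 * σ (Iic x) ^ (1 / 2 : ℝ)) ^ (1 / q) :=
        ENNReal.rpow_le_rpow (setLIntegral_measure_Iic_rpow_neg_half_le σ x) (by positivity)
    _ = 2 ^ (1 / q) * σ (Iic x) ^ (1 / (2 * q)) := by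
        rw [ENNReal.mul_rpow_of_nonneg _ _ (by positivity), ← ENNReal.rpow_mul, one_div_mul_one_div]
    _ ≤ 2 * σ (Iic x) ^ (1 / (2 * q)) := by
        gcongr
        calc (2 : ℝ≥0∞) ^ (1 / q) ≤ 2 ^ (1 : ℝ) :=
              ENNReal.rpow_le_rpow_of_exponent_le one_le_two ((div_le_one hq0).2 hq)
          _ = 2 := ENNReal.rpow_one 2

theorem rpow_setLIntegral_Iic_le (σ : Measure α) {p q : ℝ} (hpq : p.HolderConjugate q)
    {φ : α → ℝ≥0∞} (hφ : Measurable φ) {x : α} (hx : σ (Iic x) ≠ ∞) :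
    (∫⁻ t in Iic x, φ t ∂σ) ^ p ≤
      ∫⁻ t in Iic x, (2 * (σ (Iic x) * σ (Iic t)) ^ (1 / (2 * q)) * φ t) ^ p ∂σ := by
  set V : α → ℝ≥0∞ := fun t ↦ σ (Iic t)
  set r : ℝ := 1 / (2 * q) with hr
  have hp0 : 0 ≤ p := hpq.nonneg
  have hq0 : 0 < q := hpq.symm.pos
  have hr0 : 0 ≤ r := by positivity
  have hV : Measurable V := measurable_measure_Iic σ
  have hsplit : ∀ᵐ t ∂σ.restrict (Iic x), φ t = V t ^ (-r) * (V t ^ r * φ t) := by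
    filter_upwards [ae_restrict_of_ae (ae_measure_Iic_ne_zero σ),
      ae_restrict_mem measurableSet_Iic] with t ht0 htx
    have htop : V t ≠ ∞ := measure_ne_top_of_subset (Iic_subset_Iic.2 htx) hx
    rw [← mul_assoc, ← ENNReal.rpow_add _ _ ht0 htop, neg_add_cancel, ENNReal.rpow_zero, one_mul]
  have hholder : ∫⁻ t in Iic x, φ t ∂σ ≤
      2 * V x ^ r * (∫⁻ t in Iic x, (V t ^ r * φ t) ^ p ∂σ) ^ (1 / p) := by
    rw [lintegral_congr_ae hsplit]
    refine (ENNReal.lintegral_mul_le_Lp_mul_Lq _ hpq.symm (hV.pow_const _).aemeasurable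
      ((hV.pow_const _).mul hφ).aemeasurable).trans (mul_le_mul_left ?_ _)
    have hexp : -r * q = -(1 / 2) := by rw [hr]; field_simp
    simpa only [← ENNReal.rpow_mul, hexp] using
      setLIntegral_measure_Iic_rpow_neg_half_rpow_le σ hpq.symm.lt.le x
  calc (∫⁻ t in Iic x, φ t ∂σ) ^ p
      ≤ (2 * V x ^ r * (∫⁻ t in Iic x, (V t ^ r * φ t) ^ p ∂σ) ^ (1 / p)) ^ p :=
        ENNReal.rpow_le_rpow hholder hp0
    _ = ∫⁻ t in Iic x, (2 * (V x * V t) ^ r * φ t) ^ p ∂σ := by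
        rw [ENNReal.mul_rpow_of_nonneg _ _ hp0, one_div, ENNReal.rpow_inv_rpow hpq.ne_zero,
          ← lintegral_const_mul _ (by fun_prop)]
        simp only [← ENNReal.mul_rpow_of_nonneg _ _ hp0, ENNReal.mul_rpow_of_nonneg _ _ hr0,
          mul_assoc]

variable {Φ Φinv : ℝ → ℝ}

theorem lintegral_apply_le_one_of_enorm_rpow_le (hΦ : IsYoung Φ) (hsub : Submult Φ)
    (hinv : IsYoungInv Φ Φinv) {p : ℝ} (hp : 0 < p)
    (hΛ : ConvexOn ℝ univ fun t ↦ Φ (|t| ^ (1 / p))) {ν P : Measure α} [SFinite ν]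
    (hP : P univ ≤ 1) {G : α → ℝ}
    (hG : ∀ᵐ x ∂ν, ‖G x‖ₑ ^ p ≤ ∫⁻ t in Iic x,
      ENNReal.ofReal (Φinv (1 / 2) * invTail Φinv ν t * invTail Φinv ν x) ^ p ∂P) :
    ∫⁻ x, ENNReal.ofReal (Φ (G x)) ∂ν ≤ 1 := by
  have : IsFiniteMeasure P := ⟨hP.trans_lt ENNReal.one_lt_top⟩
  obtain ⟨-, heven, hΦ0, hΦ_nonneg, -⟩ := hΦ
  have hQ := hinv.invTail_nonneg ν
  have hhalf : 0 ≤ Φinv (1 / 2) := hinv.1 _ (by norm_num)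
  have habs (y : ℝ) : Φ |y| = Φ y := by rcases abs_choice y with h | h <;> simp only [h, heven]
  have hpoint : ∀ᵐ x ∂ν, ENNReal.ofReal (Φ (G x)) ≤
      2⁻¹ * ∫⁻ t in Iic x, ν (Ici t) ^ (-(1 / 2) : ℝ) * ν (Ici x) ^ (-(1 / 2) : ℝ) ∂P := by
    filter_upwards [hG] with x hx
    rw [← lintegral_const_mul' _ _ (by simp), ← habs]
    refine (ofReal_apply_le_lintegral_of_convexOn_rpow (P := P.restrict (Iic x)) ?_ hp hΦ0
      hΦ_nonneg hΛ (fun t ↦ mul_nonneg (mul_nonneg hhalf (hQ t)) (hQ x)) (abs_nonneg _) ?_).trans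
      (lintegral_mono fun t ↦ ofReal_apply_mul_invTail_le hΦ_nonneg hsub hinv ν x t)
    · exact (Measure.restrict_apply_univ _).trans_le ((measure_mono (subset_univ _)).trans hP)
    · rwa [← Real.norm_eq_abs, ofReal_norm]
  calc ∫⁻ x, ENNReal.ofReal (Φ (G x)) ∂ν
      ≤ 2⁻¹ * ∫⁻ x, ∫⁻ t in Iic x,
          ν (Ici t) ^ (-(1 / 2) : ℝ) * ν (Ici x) ^ (-(1 / 2) : ℝ) ∂P ∂ν := by
        rw [← lintegral_const_mul' _ _ (by simp)]
        exact lintegral_mono_ae hpoint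
    _ ≤ 2⁻¹ * (2 * P univ) := by
        gcongr
        exact lintegral_setLIntegral_measure_Ici_rpow_neg_half_le ν P
    _ = P univ := by
        rw [← mul_assoc, ENNReal.inv_mul_cancel two_ne_zero ENNReal.ofNat_ne_top, one_mul]
    _ ≤ 1 := hP

theorem rpow_setLIntegral_Iic_le_of_rpow_measure_le {σ : Measure α} {p q : ℝ}
    (hpq : p.HolderConjugate q) {φ : α → ℝ≥0∞} (hφ : Measurable φ) {S : ℝ≥0∞} (hS : S ≠ ∞)
    {Q : α → ℝ≥0∞} {x : α} (hQ : Q x ≠ ∞) (hbound : ∀ t ≤ x, σ (Iic t) ^ (1 / q) ≤ S * Q t ^ 2) :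
    (∫⁻ t in Iic x, φ t ∂σ) ^ p ≤ ∫⁻ t in Iic x, (2 * S * (Q t * Q x) * φ t) ^ p ∂σ := by
  have hq0 : 0 < q := hpq.symm.pos
  have hV (t : α) (ht : t ≤ x) : σ (Iic t) ≤ (S * Q t ^ 2) ^ q := by
    simpa only [one_div, ENNReal.rpow_inv_le_iff hq0] using hbound t ht
  have hfin : σ (Iic x) ≠ ∞ :=
    ne_top_of_le_ne_top (by finiteness) (hV x le_rfl)
  refine (rpow_setLIntegral_Iic_le σ hpq hφ hfin).trans
    (setLIntegral_mono' measurableSet_Iic fun t ht ↦ ?_)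
  have hkernel : (σ (Iic x) * σ (Iic t)) ^ (1 / (2 * q)) ≤ S * (Q t * Q x) := by
    calc (σ (Iic x) * σ (Iic t)) ^ (1 / (2 * q))
        ≤ ((S * Q x ^ 2) ^ q * (S * Q t ^ 2) ^ q) ^ (1 / (2 * q)) := by
          gcongr
          exacts [hV x le_rfl, hV t ht]
      _ = (((S * (Q t * Q x)) ^ 2) ^ q) ^ (1 / (2 * q)) := by
          rw [← ENNReal.mul_rpow_of_nonneg _ _ hq0.le]
          congr 2
          ring
      _ = S * (Q t * Q x) := by
          have hexp : 2 * (q * (1 / (2 * q))) = 1 := by field_simp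
          rw [← ENNReal.rpow_mul, ← ENNReal.rpow_two, ← ENNReal.rpow_mul, hexp, ENNReal.rpow_one]
  rw [mul_assoc 2 S]
  gcongr
  exact hpq.nonneg

theorem lintegral_apply_le_one_of_rpow_measure_Iic_le {p q : ℝ} (hpq : p.HolderConjugate q)
    (hΦ : IsYoung Φ) (hsub : Submult Φ) (hinv : IsYoungInv Φ Φinv)
    (hΛ : ConvexOn ℝ univ fun t ↦ Φ (|t| ^ (1 / p))) {ν σ : Measure α} [SFinite ν]
    {S : ℝ≥0∞} (hS : S ≠ ∞) (hbound : ∀ x, ν (Ici x) ≠ 0 →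
      σ (Iic x) ^ (1 / q) ≤ S * ENNReal.ofReal (invTail Φinv ν x) ^ 2)
    {φ : α → ℝ≥0} (hφ : Measurable φ)
    (hφ_norm : ENNReal.ofReal (2 * (Φinv (1 / 2))⁻¹) * S *
      (∫⁻ t, (φ t : ℝ≥0∞) ^ p ∂σ) ^ (1 / p) ≤ 1)
    {G : α → ℝ} (hG : ∀ᵐ x ∂ν, ‖G x‖ₑ ≤ ∫⁻ t in Iic x, φ t ∂σ) :
    ∫⁻ x, ENNReal.ofReal (Φ (G x)) ∂ν ≤ 1 := by
  have hp0 : 0 < p := hpq.pos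
  have hhalf : 0 < Φinv (1 / 2) := hinv.pos hΦ.2.2.1 one_half_pos
  set κ : ℝ≥0∞ := ENNReal.ofReal (2 * (Φinv (1 / 2))⁻¹) * S with hκ
  have hκ_top : κ ≠ ∞ := by finiteness
  have hκS : 2 * S = κ * ENNReal.ofReal (Φinv (1 / 2)) := by
    rw [hκ, mul_right_comm, ← ENNReal.ofReal_mul (by positivity), inv_mul_cancel_right₀ hhalf.ne',
      ENNReal.ofReal_ofNat]
  have hφ' : Measurable fun t ↦ (κ * φ t) ^ p := by fun_prop
  have hP : σ.withDensity (fun t ↦ (κ * φ t) ^ p) univ ≤ 1 := by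
    rw [withDensity_apply _ MeasurableSet.univ, Measure.restrict_univ]
    simp only [ENNReal.mul_rpow_of_nonneg _ _ hp0.le]
    rw [lintegral_const_mul _ (by fun_prop), ← ENNReal.rpow_inv_rpow hp0.ne' (lintegral _ _),
      ← ENNReal.mul_rpow_of_nonneg _ _ hp0.le, ← one_div]
    exact ENNReal.rpow_le_one hφ_norm hp0.le
  refine lintegral_apply_le_one_of_enorm_rpow_le hΦ hsub hinv hp0 hΛ hP ?_
  filter_upwards [hG, ae_measure_Ici_ne_zero ν] with x hx hx0
  rw [setLIntegral_withDensity_eq_setLIntegral_mul_non_measurable _ hφ' _ measurableSet_Iic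
    (ae_of_all _ fun t ↦ by finiteness)]
  calc ‖G x‖ₑ ^ p ≤ (∫⁻ t in Iic x, φ t ∂σ) ^ p := by gcongr
    _ ≤ ∫⁻ t in Iic x, (2 * S * (ENNReal.ofReal (invTail Φinv ν t) *
          ENNReal.ofReal (invTail Φinv ν x)) * φ t) ^ p ∂σ :=
        rpow_setLIntegral_Iic_le_of_rpow_measure_le hpq hφ.coe_nnreal_ennreal hS
          ENNReal.ofReal_ne_top fun t ht ↦ hbound t fun h0 ↦
            hx0 (measure_mono_null (Ici_subset_Ici.2 ht) h0)
    _ = ∫⁻ t in Iic x, (κ * φ t) ^ p * ENNReal.ofReal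
          (Φinv (1 / 2) * invTail Φinv ν t * invTail Φinv ν x) ^ p ∂σ := by
        refine lintegral_congr fun t ↦ ?_
        rw [← ENNReal.mul_rpow_of_nonneg _ _ hp0.le, hκS,
          ENNReal.ofReal_mul (mul_nonneg hhalf.le (hinv.invTail_nonneg ν t)),
          ENNReal.ofReal_mul hhalf.le]
        congr 1
        ring

theorem luxNormGen_le_of_rpow_measure_Iic_le {p q : ℝ} (hpq : p.HolderConjugate q)
    (hΦ : IsYoung Φ) (hsub : Submult Φ) (hinv : IsYoungInv Φ Φinv)
    (hΛ : ConvexOn ℝ univ fun t ↦ Φ (|t| ^ (1 / p))) {ν σ : Measure α} [SFinite ν]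
    {S : ℝ≥0∞} (hS : S ≠ ∞) (hbound : ∀ x, ν (Ici x) ≠ 0 →
      σ (Iic x) ^ (1 / q) ≤ S * ENNReal.ofReal (invTail Φinv ν x) ^ 2)
    {φ : α → ℝ≥0} (hφ : Measurable φ) {F : α → ℝ} (hF : ∀ᵐ x ∂ν, ‖F x‖ₑ ≤ ∫⁻ t in Iic x, φ t ∂σ) :
    luxNormGen Φ ν F ≤
      ENNReal.ofReal (2 * (Φinv (1 / 2))⁻¹) * S * (∫⁻ t, (φ t : ℝ≥0∞) ^ p ∂σ) ^ (1 / p) := by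
  refine luxNormGen_le_of_forall fun c hc hKc ↦ ?_
  lift c to ℝ≥0 using hc.le
  rw [NNReal.coe_pos] at hc
  rw [ENNReal.ofReal_coe_nnreal] at hKc
  have hscale (t : α) : ((c⁻¹ * φ t : ℝ≥0) : ℝ≥0∞) = (c : ℝ≥0∞)⁻¹ * φ t := by
    rw [ENNReal.coe_mul, ENNReal.coe_inv hc.ne']
  refine lintegral_apply_le_one_of_rpow_measure_Iic_le hpq hΦ hsub hinv hΛ hS hbound
    (φ := fun t ↦ c⁻¹ * φ t) (by fun_prop) ?_ ?_
  · simp only [hscale, ENNReal.mul_rpow_of_nonneg _ _ hpq.nonneg]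
    rw [lintegral_const_mul _ (by fun_prop),
      ENNReal.mul_rpow_of_nonneg _ _ (one_div_nonneg.2 hpq.nonneg),
      ← ENNReal.rpow_mul, mul_one_div_cancel hpq.ne_zero, ENNReal.rpow_one, mul_left_comm]
    exact (ENNReal.inv_mul_le_iff (by simpa using hc.ne') ENNReal.coe_ne_top).2 (by simpa using hKc)
  · filter_upwards [hF] with x hx
    simp only [hscale]
    rw [lintegral_const_mul _ (by fun_prop), div_eq_inv_mul, enorm_mul]
    gcongr
    simp [ENNReal.coe_inv hc.ne', enorm_eq_nnnorm]

end OrderedSpace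

section Interval

theorem luxNorm_eq_luxNormGen {μ : ℝ → ℝ} (hμ : Measurable μ) (hμ0 : ∀ x, 0 ≤ μ x)
    (Φ : ℝ → ℝ) (a b : ℝ) (F : ℝ → ℝ) :
    luxNorm Φ μ a b F =
      luxNormGen Φ ((volume.withDensity fun x ↦ ENNReal.ofReal (μ x)).restrict (Ioo a b)) F := by
  have hint (c : ℝ) : ∫⁻ x in Ioo a b, ENNReal.ofReal (Φ (F x / c))
      ∂volume.withDensity (fun x ↦ ENNReal.ofReal (μ x)) =
        ∫⁻ x in Icc a b, ENNReal.ofReal (Φ (F x / c) * μ x) := by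
    rw [setLIntegral_withDensity_eq_setLIntegral_mul_non_measurable _ (by fun_prop) _
      measurableSet_Ioo (by simp), restrict_Ioo_eq_restrict_Icc]
    simp only [Pi.mul_apply, ENNReal.ofReal_mul' (hμ0 _), mul_comm (ENNReal.ofReal (μ _))]
  simp only [luxNorm, luxNormGen, hint]

theorem withDensity_Ico_eq_wInt (μ : ℝ → ℝ) (x b : ℝ) :
    volume.withDensity (fun t ↦ ENNReal.ofReal (μ t)) (Ico x b) = wInt μ x b := by
  rw [withDensity_apply _ measurableSet_Ico, restrict_Ico_eq_restrict_Icc, wInt]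

/-- The measure `w^{1-q} dt` on `[a,b]`; for `q = p'` its distribution function is the integral in
the definition of `S`. -/
def dualMeasure (w : ℝ → ℝ) (q a b : ℝ) : Measure ℝ :=
  (volume.restrict (Icc a b)).withDensity fun t ↦ ENNReal.ofReal (w t ^ (1 - q))

variable {w : ℝ → ℝ} {a b : ℝ}

theorem dualMeasure_Iic (w : ℝ → ℝ) (q : ℝ) {x : ℝ} (hx : x ≤ b) :
    dualMeasure w q a b (Iic x) = ∫⁻ t in Icc a x, ENNReal.ofReal (w t ^ (1 - q)) := by
  rw [dualMeasure, withDensity_apply _ measurableSet_Iic,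
    Measure.restrict_restrict measurableSet_Iic, inter_comm, ← Ici_inter_Iic, inter_assoc,
    Iic_inter_Iic, inf_eq_right.2 hx, Ici_inter_Iic]

/-- The density `|f| w^{q-1}` of `|f| dt` with respect to `dualMeasure w q a b`, through which the
inequality is reduced to one over a single measure. -/
def dualDensity (w : ℝ → ℝ) (q : ℝ) (f : ℝ → ℝ) (t : ℝ) : ℝ≥0 :=
  ‖f t‖₊ * (w t ^ (q - 1)).toNNReal

theorem measurable_dualDensity (hw : Measurable w) (q : ℝ) {f : ℝ → ℝ} (hf : Measurable f) :
    Measurable (dualDensity w q f) := by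
  unfold dualDensity
  fun_prop

theorem setLIntegral_dualDensity (hw : IsWeight w a b) (q : ℝ) (f : ℝ → ℝ) {s : Set ℝ}
    (hs : MeasurableSet s) (hsab : s ⊆ Icc a b) :
    ∫⁻ t in s, dualDensity w q f t ∂dualMeasure w q a b = ∫⁻ t in s, ‖f t‖ₑ := by
  obtain ⟨hwm, -, hwpos⟩ := hw
  rw [dualMeasure, setLIntegral_withDensity_eq_setLIntegral_mul_non_measurable _ (by fun_prop) _ hs
    (by simp), Measure.restrict_restrict_of_subset hsab]
  refine lintegral_congr_ae ?_
  filter_upwards [ae_mono (Measure.restrict_mono_set _ hsab) hwpos] with t ht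
  have hcancel : ENNReal.ofReal (w t ^ (1 - q)) * ENNReal.ofReal (w t ^ (q - 1)) = 1 := by
    rw [← ENNReal.ofReal_mul (by positivity), ← Real.rpow_add ht]
    simp
  rw [Pi.mul_apply, dualDensity, ENNReal.coe_mul, mul_left_comm, ← ENNReal.ofReal, hcancel, mul_one,
    enorm_eq_nnnorm]

theorem lintegral_dualDensity_rpow (hw : IsWeight w a b) {p q : ℝ} (hpq : p.HolderConjugate q)
    (f : ℝ → ℝ) :
    ∫⁻ t, (dualDensity w q f t : ℝ≥0∞) ^ p ∂dualMeasure w q a b =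
      ∫⁻ t in Icc a b, ENNReal.ofReal (|f t| ^ p * w t) := by
  obtain ⟨hwm, -, hwpos⟩ := hw
  rw [dualMeasure, lintegral_withDensity_eq_lintegral_mul_non_measurable _ (by fun_prop) (by simp)]
  refine lintegral_congr_ae ?_
  filter_upwards [hwpos] with t ht
  have hexp : (1 - q) + (q - 1) * p = 1 := by linarith [hpq.mul_eq_add]
  have hw_rpow : w t ^ (1 - q) * (w t ^ (q - 1)) ^ p = w t := by
    rw [← Real.rpow_mul ht.le, ← Real.rpow_add ht, hexp, Real.rpow_one]
  have hcoe : (dualDensity w q f t : ℝ≥0∞) = ENNReal.ofReal (|f t| * w t ^ (q - 1)) := by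
    rw [ENNReal.ofReal_mul (abs_nonneg _), ← Real.norm_eq_abs, ofReal_norm]
    rfl
  rw [Pi.mul_apply, hcoe, ENNReal.ofReal_rpow_of_nonneg (by positivity) hpq.nonneg,
    ← ENNReal.ofReal_mul (by positivity), Real.mul_rpow (abs_nonneg _) (by positivity),
    mul_left_comm, hw_rpow]

theorem enorm_intervalIntegral_le_setLIntegral_dualDensity (hw : IsWeight w a b) (q : ℝ)
    (f : ℝ → ℝ) {x : ℝ} (hax : a ≤ x) (hxb : x ≤ b) :
    ‖∫ t in a..x, f t‖ₑ ≤ ∫⁻ t in Iic x, dualDensity w q f t ∂dualMeasure w q a b := by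
  rw [intervalIntegral.integral_of_le hax]
  calc ‖∫ t in Ioc a x, f t‖ₑ ≤ ∫⁻ t in Ioc a x, ‖f t‖ₑ := enorm_integral_le_lintegral_enorm _
    _ = ∫⁻ t in Ioc a x, dualDensity w q f t ∂dualMeasure w q a b :=
      (setLIntegral_dualDensity hw q f measurableSet_Ioc
        (Ioc_subset_Icc_self.trans (Icc_subset_Icc_right hxb))).symm
    _ ≤ ∫⁻ t in Iic x, dualDensity w q f t ∂dualMeasure w q a b :=
      lintegral_mono_set Ioc_subset_Iic_self

theorem dualMeasure_Iic_eq_zero (w : ℝ → ℝ) (q b : ℝ) {x : ℝ} (hx : x ≤ a) :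
    dualMeasure w q a b (Iic x) = 0 := by
  refine withDensity_absolutelyContinuous _ _ ?_
  rw [Measure.restrict_apply measurableSet_Iic]
  refine measure_mono_null (t := {a}) (fun t ht ↦ ?_) Real.volume_singleton
  exact le_antisymm (ht.1.trans hx) ht.2.1

theorem restrict_Ioo_Ici (μ : Measure ℝ) {x : ℝ} (hx : a < x) :
    μ.restrict (Ioo a b) (Ici x) = μ (Ico x b) := by
  rw [Measure.restrict_apply measurableSet_Ici]
  congr 1
  ext t
  simp only [mem_inter_iff, mem_Ici, mem_Ioo, mem_Ico]
  exact ⟨fun h ↦ ⟨h.1, h.2.2⟩, fun h ↦ ⟨h.1, hx.trans_le h.1, h.2⟩⟩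

/-- As real powers give `0 ^ (-1/2) = 0`, the condition `μ [x,b) ≠ 0` encodes `Φ⁻¹(∞)⁻² = 0`. -/
theorem orlicz_hardy_left_general {a b p pc : ℝ} (hp : 1 < p) (hpc : pc = p / (p - 1))
    {Φ Φinv w : ℝ → ℝ} (hΦ : IsYoung Φ) (hsub : Submult Φ) (hinv : IsYoungInv Φ Φinv)
    (hΛ : ConvexOn ℝ univ fun t ↦ Φ (|t| ^ (1 / p)))
    (μ : Measure ℝ) [SFinite μ] (hw : IsWeight w a b) {S : ℝ≥0∞} (hSfin : S < ⊤)
    (hS : ∀ x ∈ Ioo a b, μ (Ico x b) ≠ 0 →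
      (ENNReal.ofReal (Φinv ((μ (Ico x b)).toReal ^ (-(1 / 2) : ℝ))) ^ 2)⁻¹ *
        (∫⁻ t in Icc a x, ENNReal.ofReal (w t ^ (1 - pc))) ^ (1 / pc) ≤ S)
    {f : ℝ → ℝ} (hf : Measurable f) :
    luxNormGen Φ (μ.restrict (Ioo a b)) (fun x ↦ ∫ t in a..x, f t) ≤
      ENNReal.ofReal (2 * (Φinv (1 / 2))⁻¹) * S * lpNorm w p a b f := by
  have hpq : p.HolderConjugate pc := hpc ▸ Real.HolderConjugate.conjExponent hp
  rw [_root_.lpNorm, ← lintegral_dualDensity_rpow hw hpq]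
  refine luxNormGen_le_of_rpow_measure_Iic_le hpq hΦ hsub hinv hΛ hSfin.ne (fun x hx0 ↦ ?_)
    (measurable_dualDensity hw.1 pc hf) ?_
  · rcases le_or_gt x a with hxa | hax
    · simp [dualMeasure_Iic_eq_zero w pc b hxa, hpq.symm.pos]
    rw [restrict_Ioo_Ici μ hax] at hx0
    have hxb : x < b := by
      by_contra! hbx
      simp [Ico_eq_empty_of_le hbx] at hx0
    have hSx := hS x ⟨hax, hxb⟩ hx0
    rw [mul_comm, ← div_eq_mul_inv, ENNReal.div_le_iff_le_mul (by simp [hSfin.ne])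
      (by simp)] at hSx
    rwa [dualMeasure_Iic w pc hxb.le, invTail, restrict_Ioo_Ici μ hax]
  · filter_upwards [ae_restrict_mem measurableSet_Ioo] with x hx
    exact enorm_intervalIntegral_le_setLIntegral_dualDensity hw pc f hx.1.le hx.2.le

end Interval

/-- Orlicz–Hardy inequality for `x ↦ ∫ₐ^x f`: if `S < ∞` then
`‖∫ₐ^• f‖_{L_μ^Φ[a,b]} ≤ C₀(Φ) S ‖f‖_{L_w^p[a,b]}`. -/
theorem orlicz_hardy_left
    (a b : ℝ) (hab : a < b) (p pc : ℝ) (hp : 1 < p) (hpc : pc = p / (p - 1))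
    (Φ Φinv μ w : ℝ → ℝ)
    (hΦ : IsYoung Φ) (hsub : Submult Φ) (hinv : IsYoungInv Φ Φinv)
    (hΛ : ConvexOn ℝ Set.univ (fun t => Φ (|t| ^ (1 / p))))
    (hμ : IsWeight μ a b) (hw : IsWeight w a b)
    (S : ℝ≥0∞)
    (hS : S = ⨆ x ∈ Set.Ioo a b,
      ((ENNReal.ofReal (Φinv ((wInt μ x b).toReal ^ (-(1/2) : ℝ)))) ^ 2)⁻¹ *
        (∫⁻ t in Set.Icc a x, ENNReal.ofReal (w t ^ (1 - pc))) ^ (1 / pc))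
    (hSfin : S < ⊤) :
    ∀ f : ℝ → ℝ, Measurable f →
      (∫⁻ t in Set.Icc a b, ENNReal.ofReal (|f t| ^ p * w t)) < ⊤ →
      luxNorm Φ μ a b (fun x => ∫ t in a..x, f t)
        ≤ ENNReal.ofReal (2 * (Φinv (1/2))⁻¹) * S * lpNorm w p a b f := by
  intro f hf _
  rw [luxNorm_eq_luxNormGen hμ.1 hμ.2.1]
  exact orlicz_hardy_left_general hp hpc hΦ hsub hinv hΛ _ hw hSfin
    (fun x hx _ ↦ by simpa only [withDensity_Ico_eq_wInt] using iSup₂_le_iff.1 hS.ge x hx) hf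
end
end

section
/- Let -∞ < a < b < ∞, 1 < p < ∞ with conjugate exponent p' = p/(p−1), let μ and w be weights on [a,b], and let Φ be a Young function that is submultiplicative and invertible on [0,∞) such that Λ(t) = Φ(t^{1/p}) is convex. Define T := sup_{a<x<b} { [Φ^{-1}(μ[a,x]^{-1/2})]^{-2} · (∫_x^b w(t)^{1−p'} dt)^{1/p'} }. If T < ∞, then for every f ∈ L_w^p[a,b], ‖ x ↦ ∫_x^b f(t) dt ‖_{L_μ^Φ[a,b]} ≤ C₀(Φ) · T · ‖f‖_{L_w^p[a,b]}, where C₀(Φ) := 2·[Φ^{-1}(1/2)]^{-1}. -/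
open MeasureTheory Set Filter
open scoped ENNReal NNReal

noncomputable section

/-!
Write `V(x) = ∫ₓᵇ w^(1-p')` and `ψ(x) = Φ⁻¹(μ[a,x]^(-1/2))`, and normalise `‖f‖_{L_w^p} = 1`, so
that `dν = |f|^p w dt` is a probability measure. Hölder's inequality with the weight
`w V^(p/(2p'))` leaves the factor `∫ₓᵇ w^(1-p') V^(-1/2) ≤ 2 V(x)^(1/2)`, and `T < ∞` says
`V^(1/(2p')) ≤ T^(1/2) ψ`; hence `|∫ₓᵇ f| ≤ 2 T ψ(x) (∫ₓᵇ ψ^p dν)^(1/p)`. With `m = Φ⁻¹(1/2)`,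
Jensen's inequality for `t ↦ Φ(t^(1/p))` and submultiplicativity bound `Φ (m |∫ₓᵇ f| / (2 T))` by
`(1/2) μ[a,x]^(-1/2) ∫ₓᵇ μ[a,t]^(-1/2) dν(t)`. By Tonelli and
`∫ₐᵗ μ[a,x]^(-1/2) μ(x) dx ≤ 2 μ[a,t]^(1/2)`, the integral of this against `μ` is at most `1`.
-/

lemma measure_setOf_lt_le_of_isCompact {α : Type*} [TopologicalSpace α] [MeasurableSpace α]
    {ρ : Measure α} [IsFiniteMeasure ρ] [ρ.InnerRegularCompactLTTop] {u : α → ℝ≥0∞}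
    (hu : Measurable u) (h : ∀ K, IsCompact K → K.Nonempty → ∃ x ∈ K, ρ K ≤ u x) (r : ℝ≥0∞) :
    ρ {x | u x < r} ≤ r := by
  rw [(measurableSet_lt hu measurable_const).measure_eq_iSup_isCompact_of_ne_top
    (measure_ne_top _ _)]
  refine iSup₂_le fun K hK => iSup_le fun hKc => ?_
  rcases K.eq_empty_or_nonempty with rfl | hne
  · simp
  · obtain ⟨x, hxK, hx⟩ := h K hKc hne
    exact hx.trans (hK hxK).le

lemma lintegral_Ioo_rpow_neg {M s : ℝ} (hM : 0 ≤ M) (hs : s < 1) :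
    ∫⁻ y in Ioo 0 M, ENNReal.ofReal (y ^ (-s)) = ENNReal.ofReal (M ^ (1 - s) / (1 - s)) := by
  have hint : IntegrableOn (fun y : ℝ => y ^ (-s)) (Ioo 0 M) :=
    ((intervalIntegrable_iff_integrableOn_Ioc_of_le hM).1
      (intervalIntegral.intervalIntegrable_rpow' (by linarith))).mono_set Ioo_subset_Ioc_self
  rw [← ofReal_integral_eq_lintegral_ofReal hint
      ((ae_restrict_mem measurableSet_Ioo).mono fun y hy => Real.rpow_nonneg hy.1.le _),
    ← integral_Ioc_eq_integral_Ioo, ← intervalIntegral.integral_of_le hM,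
    integral_rpow (Or.inl (by linarith)), Real.zero_rpow (by linarith), sub_zero, neg_add_eq_sub]

lemma lt_rpow_neg_iff_lt_rpow_inv {x y : ℝ≥0∞} {s : ℝ} (hs : 0 < s) :
    y < x ^ (-s) ↔ x < y ^ (-s)⁻¹ := by
  rw [inv_neg, ENNReal.rpow_neg, ENNReal.lt_inv_iff_lt_inv, ENNReal.rpow_neg y, ← ENNReal.inv_rpow,
    ENNReal.lt_rpow_inv_iff hs]

section Measure

variable {α : Type*} [MeasurableSpace α] {ρ : Measure α} [IsFiniteMeasure ρ] {u : α → ℝ≥0∞}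

lemma measure_setOf_lt_toReal_rpow_neg_le (h : ∀ r, ρ {x | u x < r} ≤ r) {s t : ℝ} (hs : 0 < s)
    (ht : 0 < t) :
    ρ {x | t < (u x ^ (-s)).toReal} ≤
      volume.restrict (Ioo 0 (ρ univ).toReal) {y | t < y ^ (-s)} := by
  have hsub : {x | t < (u x ^ (-s)).toReal} ⊆ {x | u x < ENNReal.ofReal (t ^ (-s)⁻¹)} := by
    intro x (hx : t < (u x ^ (-s)).toReal)
    have htop : u x ^ (-s) ≠ ⊤ := fun htop => by
      rw [htop, ENNReal.toReal_top] at hx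
      exact lt_asymm ht hx
    rw [← ENNReal.ofReal_lt_iff_lt_toReal ht.le htop, lt_rpow_neg_iff_lt_rpow_inv hs,
      ENNReal.ofReal_rpow_of_pos ht] at hx
    exact hx
  have hIoo : Ioo 0 (min (ρ univ).toReal (t ^ (-s)⁻¹)) ⊆
      {y | t < y ^ (-s)} ∩ Ioo 0 (ρ univ).toReal := fun y ⟨hy0, hy⟩ =>
    ⟨(Real.lt_rpow_inv_iff_of_neg hy0 ht (neg_lt_zero.2 hs)).1 (lt_min_iff.1 hy).2,
      hy0, (lt_min_iff.1 hy).1⟩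
  calc ρ {x | t < (u x ^ (-s)).toReal}
      ≤ min (ρ univ) (ENNReal.ofReal (t ^ (-s)⁻¹)) :=
        le_min (measure_mono (subset_univ _)) ((measure_mono hsub).trans (h _))
    _ = volume (Ioo 0 (min (ρ univ).toReal (t ^ (-s)⁻¹))) := by
        rw [Real.volume_Ioo, sub_zero, ENNReal.ofReal_min, ENNReal.ofReal_toReal (by finiteness)]
    _ ≤ volume.restrict (Ioo 0 (ρ univ).toReal) {y | t < y ^ (-s)} := by
        rw [Measure.restrict_apply' measurableSet_Ioo]
        exact measure_mono hIoo

-- The hypothesis says that `u` stochastically dominates the uniform law on `(0, ρ univ)`.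
lemma lintegral_rpow_neg_le_of_measure_lt_le (hu : Measurable u) (h : ∀ r, ρ {x | u x < r} ≤ r)
    {s : ℝ} (hs0 : 0 < s) (hs1 : s < 1) :
    ∫⁻ x, u x ^ (-s) ∂ρ ≤ ENNReal.ofReal (1 - s)⁻¹ * ρ univ ^ (1 - s) := by
  have hu0 : ∀ᵐ x ∂ρ, u x ≠ 0 := by
    refine nonpos_iff_eq_zero.1 (le_of_forall_gt fun r hr => ?_)
    obtain ⟨r', hr'0, hr'⟩ := exists_between hr
    refine (measure_mono fun x hx => ?_).trans_lt ((h r').trans_lt hr')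
    simpa [not_not.1 hx] using hr'0
  calc ∫⁻ x, u x ^ (-s) ∂ρ
      = ∫⁻ x, ENNReal.ofReal (u x ^ (-s)).toReal ∂ρ := by
        refine lintegral_congr_ae (hu0.mono fun x hx => ?_)
        exact (ENNReal.ofReal_toReal (by simp [ENNReal.rpow_eq_top_iff, hx, hs0.le])).symm
    _ = ∫⁻ t in Ioi 0, ρ {x | t < (u x ^ (-s)).toReal} :=
        lintegral_eq_lintegral_meas_lt ρ (ae_of_all _ fun _ => ENNReal.toReal_nonneg)
          (by fun_prop)
    _ ≤ ∫⁻ t in Ioi 0, volume.restrict (Ioo 0 (ρ univ).toReal) {y | t < y ^ (-s)} :=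
        setLIntegral_mono' measurableSet_Ioi fun t ht =>
          measure_setOf_lt_toReal_rpow_neg_le h hs0 ht
    _ = ∫⁻ y in Ioo 0 (ρ univ).toReal, ENNReal.ofReal (y ^ (-s)) :=
        (lintegral_eq_lintegral_meas_lt _ ((ae_restrict_mem measurableSet_Ioo).mono
          fun y hy => Real.rpow_nonneg hy.1.le _) (by fun_prop)).symm
    _ = ENNReal.ofReal (1 - s)⁻¹ * ρ univ ^ (1 - s) := by
        rw [lintegral_Ioo_rpow_neg ENNReal.toReal_nonneg hs1, div_eq_inv_mul,
          ENNReal.ofReal_mul (inv_nonneg.2 (sub_nonneg.2 hs1.le)),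
          ← ENNReal.ofReal_rpow_of_nonneg ENNReal.toReal_nonneg (sub_nonneg.2 hs1.le),
          ENNReal.ofReal_toReal (measure_ne_top _ _)]

end Measure

section Order

variable {α : Type*} [LinearOrder α] [TopologicalSpace α] [OrderTopology α] [MeasurableSpace α]
  [BorelSpace α] {ρ : Measure α} [ρ.InnerRegularCompactLTTop] {s : ℝ}

lemma setLIntegral_measure_Icc_left_rpow_neg_le (a b : α) (hs0 : 0 < s) (hs1 : s < 1) :
    ∫⁻ x in Icc a b, ρ (Icc a x) ^ (-s) ∂ρ ≤
      ENNReal.ofReal (1 - s)⁻¹ * ρ (Icc a b) ^ (1 - s) := by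
  rcases eq_or_ne (ρ (Icc a b)) ⊤ with htop | hfin
  · simp [htop, hs1]
  have : IsFiniteMeasure (ρ.restrict (Icc a b)) := isFiniteMeasure_restrict.2 hfin
  have hu : Measurable fun x => ρ (Icc a x) :=
    Monotone.measurable fun x y hxy => measure_mono (Icc_subset_Icc_right hxy)
  have hlevel := measure_setOf_lt_le_of_isCompact (ρ := ρ.restrict (Icc a b)) hu fun K hK hne => by
    obtain ⟨x, hx⟩ := hK.exists_isGreatest hne
    refine ⟨x, hx.1, ?_⟩
    rw [Measure.restrict_apply' measurableSet_Icc]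
    exact measure_mono fun y hy => ⟨hy.2.1, hx.2 hy.1⟩
  simpa only [Measure.restrict_apply_univ] using
    lintegral_rpow_neg_le_of_measure_lt_le hu hlevel hs0 hs1

lemma setLIntegral_measure_Icc_right_rpow_neg_le (a b : α) (hs0 : 0 < s) (hs1 : s < 1) :
    ∫⁻ x in Icc a b, ρ (Icc x b) ^ (-s) ∂ρ ≤
      ENNReal.ofReal (1 - s)⁻¹ * ρ (Icc a b) ^ (1 - s) := by
  rcases eq_or_ne (ρ (Icc a b)) ⊤ with htop | hfin
  · simp [htop, hs1]
  have : IsFiniteMeasure (ρ.restrict (Icc a b)) := isFiniteMeasure_restrict.2 hfin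
  have hu : Measurable fun x => ρ (Icc x b) :=
    Antitone.measurable fun x y hxy => measure_mono (Icc_subset_Icc_left hxy)
  have hlevel := measure_setOf_lt_le_of_isCompact (ρ := ρ.restrict (Icc a b)) hu fun K hK hne => by
    obtain ⟨x, hx⟩ := hK.exists_isLeast hne
    refine ⟨x, hx.1, ?_⟩
    rw [Measure.restrict_apply' measurableSet_Icc]
    exact measure_mono fun y hy => ⟨hx.2 hy.1, hy.2.2⟩
  simpa only [Measure.restrict_apply_univ] using
    lintegral_rpow_neg_le_of_measure_lt_le hu hlevel hs0 hs1

end Order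

/-- The measure `w dt` on the line attached to a density `w`; it turns `wInt` into the measure of an
interval. Negative values of `w` count as `0`. -/
abbrev weightMeasure (w : ℝ → ℝ) : Measure ℝ :=
  volume.withDensity fun t => ENNReal.ofReal (w t)

lemma weightMeasure_Icc (w : ℝ → ℝ) (x y : ℝ) : weightMeasure w (Icc x y) = wInt w x y :=
  withDensity_apply _ measurableSet_Icc

lemma setLIntegral_weightMeasure {w : ℝ → ℝ} (hw : Measurable w) (g : ℝ → ℝ≥0∞) {s : Set ℝ}
    (hs : MeasurableSet s) :
    ∫⁻ t in s, g t ∂weightMeasure w = ∫⁻ t in s, ENNReal.ofReal (w t) * g t :=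
  setLIntegral_withDensity_eq_setLIntegral_mul_non_measurable _ hw.ennreal_ofReal g hs
    (ae_of_all _ fun _ => ENNReal.ofReal_lt_top)

lemma wInt_ne_zero {w : ℝ → ℝ} {a b x y : ℝ} (hw : IsWeight w a b) (hax : a ≤ x) (hxy : x < y)
    (hyb : y ≤ b) {r : ℝ} : wInt (fun t => w t ^ r) x y ≠ 0 := by
  have hpos : ∀ᵐ t ∂volume.restrict (Icc x y), 0 < w t :=
    ae_restrict_of_ae_restrict_of_subset (Icc_subset_Icc hax hyb) hw.2.2
  intro hzero
  rw [wInt, lintegral_eq_zero_iff (hw.1.pow_const r).ennreal_ofReal] at hzero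
  have hfalse : ∀ᵐ _ ∂volume.restrict (Icc x y), False := by
    filter_upwards [hpos, hzero] with t ht ht0
    exact (Real.rpow_pos_of_pos ht r).not_ge (ENNReal.ofReal_eq_zero.1 ht0)
  rw [ae_iff] at hfalse
  simp [hxy.not_ge] at hfalse

lemma lintegral_le_Lp_mul_Lq_of_weight {α : Type*} [MeasurableSpace α] {ρ : Measure α} {p q : ℝ}
    (hpq : p.HolderConjugate q) {F ω : α → ℝ≥0∞} (hF : AEMeasurable F ρ) (hω : AEMeasurable ω ρ)
    (hω0 : ∀ᵐ x ∂ρ, ω x ≠ 0) (hωtop : ∀ᵐ x ∂ρ, ω x ≠ ⊤) :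
    ∫⁻ x, F x ∂ρ ≤ (∫⁻ x, F x ^ p * ω x ∂ρ) ^ (1 / p) * (∫⁻ x, ω x ^ (1 - q) ∂ρ) ^ (1 / q) := by
  have hsplit : ∀ᵐ x ∂ρ, F x = F x * ω x ^ (1 / p) * ω x ^ (-(1 / p)) := by
    filter_upwards [hω0, hωtop] with x h0 htop
    rw [mul_assoc, ← ENNReal.rpow_add _ _ h0 htop, add_neg_cancel, ENNReal.rpow_zero, mul_one]
  have hexp : -(1 / p) * q = 1 - q := by
    rw [neg_mul, one_div_mul_eq_div, hpq.symm.div_conj_eq_sub_one, neg_sub]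
  calc ∫⁻ x, F x ∂ρ
      = ∫⁻ x, F x * ω x ^ (1 / p) * ω x ^ (-(1 / p)) ∂ρ := lintegral_congr_ae hsplit
    _ ≤ (∫⁻ x, (F x * ω x ^ (1 / p)) ^ p ∂ρ) ^ (1 / p) *
          (∫⁻ x, (ω x ^ (-(1 / p))) ^ q ∂ρ) ^ (1 / q) :=
        ENNReal.lintegral_mul_le_Lp_mul_Lq ρ hpq (hF.mul (hω.pow_const _)) (hω.pow_const _)
    _ = (∫⁻ x, F x ^ p * ω x ∂ρ) ^ (1 / p) * (∫⁻ x, ω x ^ (1 - q) ∂ρ) ^ (1 / q) := by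
        simp only [ENNReal.mul_rpow_of_nonneg _ _ hpq.nonneg, ← ENNReal.rpow_mul,
          one_div_mul_cancel hpq.ne_zero, ENNReal.rpow_one, hexp]

lemma setLIntegral_mul_wInt_rpow_neg_half_le {v : ℝ → ℝ} (hv : Measurable v) (x b : ℝ) :
    ∫⁻ t in Ioo x b, ENNReal.ofReal (v t) * wInt v t b ^ (-(1 / 2) : ℝ) ≤
      2 * wInt v x b ^ (1 / 2 : ℝ) := by
  simp only [← weightMeasure_Icc]
  rw [← setLIntegral_weightMeasure hv _ measurableSet_Ioo]
  refine (lintegral_mono_set Ioo_subset_Icc_self).trans ?_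
  refine (setLIntegral_measure_Icc_right_rpow_neg_le x b one_half_pos one_half_lt_one).trans_eq ?_
  norm_num

section HolderTail

variable {p q a b x : ℝ} {f w : ℝ → ℝ}

-- Hölder with the weight `w(t) V(t) ^ (p / (2 q))`, where `V(t) = ∫ₜᵇ w ^ (1 - q)`.
lemma lintegral_Ioo_enorm_le (hpq : p.HolderConjugate q) (hf : Measurable f) (hw : IsWeight w a b)
    (hax : a ≤ x) (hfin : wInt (fun t => w t ^ (1 - q)) x b ≠ ⊤) :
    ∫⁻ t in Ioo x b, ‖f t‖ₑ ≤
      (∫⁻ t in Ioo x b, ‖f t‖ₑ ^ p * (ENNReal.ofReal (w t) *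
          wInt (fun s => w s ^ (1 - q)) t b ^ (p / (2 * q)))) ^ (1 / p) *
        (2 * wInt (fun t => w t ^ (1 - q)) x b ^ (1 / 2 : ℝ)) ^ (1 / q) := by
  set V : ℝ → ℝ≥0∞ := fun t => wInt (fun s => w s ^ (1 - q)) t b
  have hVanti : Antitone V := fun s t hst => lintegral_mono_set (Icc_subset_Icc_left hst)
  have hVpow : ∀ t ∈ Ioo x b, V t ^ (p / (2 * q)) ≠ 0 ∧ V t ^ (p / (2 * q)) ≠ ⊤ := fun t ht => by
    have hV0 : V t ≠ 0 := wInt_ne_zero hw (hax.trans ht.1.le) ht.2 le_rfl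
    have hVtop : V t ≠ ⊤ := ne_top_of_le_ne_top hfin (hVanti ht.1.le)
    simp [ENNReal.rpow_eq_zero_iff, ENNReal.rpow_eq_top_iff, hV0, hVtop]
  have hwpos : ∀ᵐ t ∂volume.restrict (Ioo x b), 0 < w t :=
    ae_restrict_of_ae_restrict_of_subset
      (Ioo_subset_Icc_self.trans (Icc_subset_Icc_left hax)) hw.2.2
  have hexp : p / (2 * q) * (1 - q) = -(1 / 2) := by
    have := hpq.mul_eq_add
    have := hpq.symm.ne_zero
    field_simp
    linarith
  refine (lintegral_le_Lp_mul_Lq_of_weight hpq hf.enorm.aemeasurable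
    (ω := fun t => ENNReal.ofReal (w t) * V t ^ (p / (2 * q)))
    (hw.1.ennreal_ofReal.mul (hVanti.measurable.pow_const _)).aemeasurable ?_ ?_).trans ?_
  · filter_upwards [hwpos, ae_restrict_mem measurableSet_Ioo] with t hwt ht
    exact mul_ne_zero (ENNReal.ofReal_pos.2 hwt).ne' (hVpow t ht).1
  · filter_upwards [ae_restrict_mem measurableSet_Ioo] with t ht
    exact ENNReal.mul_ne_top ENNReal.ofReal_ne_top (hVpow t ht).2
  gcongr
  · exact hpq.symm.one_div_nonneg
  refine (lintegral_congr_ae ?_).trans_le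
    (setLIntegral_mul_wInt_rpow_neg_half_le (hw.1.pow_const (1 - q)) x b)
  filter_upwards [hwpos, ae_restrict_mem measurableSet_Ioo] with t hwt ht
  rw [ENNReal.mul_rpow_of_ne_zero (ENNReal.ofReal_pos.2 hwt).ne' (hVpow t ht).1,
    ENNReal.ofReal_rpow_of_pos hwt, ← ENNReal.rpow_mul, hexp]

lemma lintegral_Ioo_mul_wInt_rpow_le (hf : Measurable f) (hw : Measurable w) (hp : 0 ≤ p)
    {τ : ℝ≥0∞} (hτ : τ ≠ ⊤) {ψ : ℝ → ℝ}
    (hV : ∀ t ∈ Ioo x b,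
      wInt (fun s => w s ^ (1 - q)) t b ^ (1 / (2 * q)) ≤ τ * ENNReal.ofReal (ψ t)) :
    ∫⁻ t in Ioo x b, ‖f t‖ₑ ^ p * (ENNReal.ofReal (w t) *
        wInt (fun s => w s ^ (1 - q)) t b ^ (p / (2 * q))) ≤
      τ ^ p * ∫⁻ t in Ioo x b, ENNReal.ofReal (ψ t) ^ p
        ∂weightMeasure fun t => |f t| ^ p * w t := by
  have hfw : Measurable fun t => |f t| ^ p * w t := (hf.abs.pow_const p).mul hw
  rw [setLIntegral_weightMeasure hfw _ measurableSet_Ioo,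
    ← lintegral_const_mul' _ _ (by finiteness)]
  refine setLIntegral_mono' measurableSet_Ioo fun t ht => ?_
  rw [ENNReal.ofReal_mul (by positivity), ← ENNReal.ofReal_rpow_of_nonneg (abs_nonneg _) hp,
    ← Real.norm_eq_abs, ofReal_norm, mul_left_comm (τ ^ p), mul_assoc,
    ← ENNReal.mul_rpow_of_nonneg _ _ hp, show p / (2 * q) = 1 / (2 * q) * p by ring,
    ENNReal.rpow_mul]
  gcongr
  exact hV t ht

lemma lintegral_Ioo_enorm_le_of_wInt_le (hpq : p.HolderConjugate q) (hf : Measurable f)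
    (hw : IsWeight w a b) (hax : a ≤ x) (hxb : x < b) {τ : ℝ≥0∞} (hτ : τ ≠ ⊤) {ψ : ℝ → ℝ}
    (hV : ∀ t ∈ Ico x b,
      wInt (fun s => w s ^ (1 - q)) t b ^ (1 / (2 * q)) ≤ τ * ENNReal.ofReal (ψ t)) :
    ∫⁻ t in Ioo x b, ‖f t‖ₑ ≤ 2 * τ ^ 2 * ENNReal.ofReal (ψ x) *
      (∫⁻ t in Ioo x b, ENNReal.ofReal (ψ t) ^ p
        ∂weightMeasure fun t => |f t| ^ p * w t) ^ (1 / p) := by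
  have hp := hpq.pos
  have hq := hpq.symm.pos
  have hVx := hV x ⟨le_rfl, hxb⟩
  have hfin : wInt (fun t => w t ^ (1 - q)) x b ≠ ⊤ := fun htop => by
    rw [htop, ENNReal.top_rpow_of_pos (by positivity)] at hVx
    exact ENNReal.mul_ne_top hτ ENNReal.ofReal_ne_top (top_le_iff.1 hVx)
  have hright : (2 * wInt (fun t => w t ^ (1 - q)) x b ^ (1 / 2 : ℝ)) ^ (1 / q) ≤
      2 * (τ * ENNReal.ofReal (ψ x)) := by
    rw [ENNReal.mul_rpow_of_nonneg _ _ (by positivity), ← ENNReal.rpow_mul,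
      one_div_mul_one_div]
    gcongr
    exact (ENNReal.rpow_le_rpow_of_exponent_le one_le_two
      ((div_le_one hq).2 hpq.symm.lt.le)).trans_eq (ENNReal.rpow_one 2)
  calc ∫⁻ t in Ioo x b, ‖f t‖ₑ
      ≤ (τ ^ p * ∫⁻ t in Ioo x b, ENNReal.ofReal (ψ t) ^ p
          ∂weightMeasure fun t => |f t| ^ p * w t) ^ (1 / p) *
          (2 * (τ * ENNReal.ofReal (ψ x))) := by
        refine (lintegral_Ioo_enorm_le hpq hf hw hax hfin).trans ?_
        gcongr
        exact lintegral_Ioo_mul_wInt_rpow_le hf hw.1 hpq.nonneg hτ fun t ht => hV t ⟨ht.1.le, ht.2⟩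
    _ = _ := by
        rw [ENNReal.mul_rpow_of_nonneg _ _ (by positivity), ← ENNReal.rpow_mul,
          mul_one_div_cancel hp.ne', ENNReal.rpow_one]
        ring

end HolderTail

lemma setLIntegral_eq_mul_setLIntegral_cond {α : Type*} [MeasurableSpace α] {E : Measure α}
    {s t : Set α} (hs : E s ≠ ⊤) (ht : MeasurableSet t) (hts : t ⊆ s) (g : α → ℝ≥0∞) :
    ∫⁻ x in t, g x ∂E = E s * ∫⁻ x in t, g x ∂ProbabilityTheory.cond E s := by
  rcases eq_or_ne (E s) 0 with h0 | h0
  · rw [h0, zero_mul, setLIntegral_measure_zero _ _ (measure_mono_null hts h0)]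
  · rw [ProbabilityTheory.cond, Measure.restrict_smul, Measure.restrict_restrict ht,
      inter_eq_self_of_subset_left hts, lintegral_smul_measure, smul_eq_mul, ← mul_assoc,
      ENNReal.mul_inv_cancel h0 hs, one_mul]

lemma enorm_intervalIntegral_le_setLIntegral_Ioo {E : Type*} [NormedAddCommGroup E]
    [NormedSpace ℝ E] {x b : ℝ} (hxb : x ≤ b) (f : ℝ → E) :
    ‖∫ t in x..b, f t‖ₑ ≤ ∫⁻ t in Ioo x b, ‖f t‖ₑ := by
  rw [intervalIntegral.integral_of_le hxb, integral_Ioc_eq_integral_Ioo]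
  exact enorm_integral_le_lintegral_enorm _

lemma ofReal_map_integral_le_lintegral_of_convexOn {α : Type*} [MeasurableSpace α] {ν : Measure α}
    [IsProbabilityMeasure ν] {Λ : ℝ → ℝ} (hΛ : ConvexOn ℝ univ Λ) (hΛ0 : ∀ t, 0 ≤ Λ t) {h : α → ℝ}
    (hh : Integrable h ν) :
    ENNReal.ofReal (Λ (∫ x, h x ∂ν)) ≤ ∫⁻ x, ENNReal.ofReal (Λ (h x)) ∂ν := by
  have hcont : Continuous Λ := continuousOn_univ.1 (hΛ.continuousOn isOpen_univ)
  by_cases hint : Integrable (fun x => Λ (h x)) ν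
  · rw [← ofReal_integral_eq_lintegral_ofReal hint (ae_of_all _ fun x => hΛ0 _)]
    exact ENNReal.ofReal_le_ofReal (hΛ.map_integral_le hcont.continuousOn isClosed_univ
      (ae_of_all _ fun _ => mem_univ _) hh hint)
  · have htop : ∫⁻ x, ENNReal.ofReal (Λ (h x)) ∂ν = ⊤ := by
      contrapose hint
      have hmeas := hcont.comp_aestronglyMeasurable hh.aestronglyMeasurable
      exact (lintegral_ofReal_ne_top_iff_integrable hmeas (ae_of_all _ fun x => hΛ0 _)).1 hint
    exact htop ▸ le_top

namespace IsYoung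

variable {Φ : ℝ → ℝ}

lemma map_abs (hΦ : IsYoung Φ) (t : ℝ) : Φ |t| = Φ t := by
  rcases abs_choice t with h | h <;> simp only [h, hΦ.2.1]

lemma monotoneOn (hΦ : IsYoung Φ) : MonotoneOn Φ (Ici 0) := by
  intro s (hs : 0 ≤ s) t _ hst
  have hmem : s ∈ segment ℝ (-t) t := by
    rw [segment_eq_Icc (by linarith)]
    exact ⟨by linarith, hst⟩
  simpa only [hΦ.2.1, max_self] using hΦ.1.le_max_of_mem_segment (mem_univ _) (mem_univ _) hmem

lemma ofReal_le_setLIntegral {α : Type*} [MeasurableSpace α] {ν : Measure α}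
    [IsZeroOrProbabilityMeasure ν] {p : ℝ} (hΦ : IsYoung Φ) (hp : 0 < p)
    (hΛ : ConvexOn ℝ univ fun t => Φ (|t| ^ (1 / p))) {S : Set α} (hS : MeasurableSet S)
    {g : α → ℝ} (hg0 : ∀ t ∈ S, 0 ≤ g t) (hg : IntegrableOn (fun t => g t ^ p) S ν) {y : ℝ}
    (hy : ‖y‖ₑ ≤ (∫⁻ t in S, ENNReal.ofReal (g t) ^ p ∂ν) ^ (1 / p)) :
    ENNReal.ofReal (Φ y) ≤ ∫⁻ t in S, ENNReal.ofReal (Φ (g t)) ∂ν := by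
  obtain rfl | _ := eq_zero_or_isProbabilityMeasure ν
  · have hy0 : y = 0 := by simpa [hp] using hy
    simp [hy0, hΦ.2.2.1]
  have hpow0 : ∀ t ∈ S, 0 ≤ g t ^ p := fun t ht => Real.rpow_nonneg (hg0 t ht) p
  set J := ∫ t, S.indicator (fun t => g t ^ p) t ∂ν with hJ
  have hJ0 : 0 ≤ J := integral_nonneg (indicator_nonneg hpow0)
  have hJlint : ∫⁻ t in S, ENNReal.ofReal (g t) ^ p ∂ν = ENNReal.ofReal J := by
    rw [hJ, integral_indicator hS, ofReal_integral_eq_lintegral_ofReal hg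
      ((ae_restrict_mem hS).mono hpow0)]
    exact setLIntegral_congr_fun hS fun t ht => ENNReal.ofReal_rpow_of_nonneg (hg0 t ht) hp.le
  have hyJ : |y| ≤ |J| ^ (1 / p) := by
    rwa [hJlint, ENNReal.ofReal_rpow_of_nonneg hJ0 (by positivity), ← ofReal_norm,
      ENNReal.ofReal_le_ofReal_iff (by positivity), Real.norm_eq_abs, ← abs_of_nonneg hJ0] at hy
  have hΛind : ∀ t, ENNReal.ofReal (Φ (|S.indicator (fun t => g t ^ p) t| ^ (1 / p))) =
      S.indicator (fun t => ENNReal.ofReal (Φ (g t))) t := fun t => by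
    by_cases ht : t ∈ S
    · rw [indicator_of_mem ht, indicator_of_mem ht, abs_of_nonneg (hpow0 t ht),
        ← Real.rpow_mul (hg0 t ht), mul_one_div_cancel hp.ne', Real.rpow_one]
    · rw [indicator_of_notMem ht, indicator_of_notMem ht, abs_zero,
        Real.zero_rpow (one_div_pos.2 hp).ne', hΦ.2.2.1, ENNReal.ofReal_zero]
  calc ENNReal.ofReal (Φ y) = ENNReal.ofReal (Φ |y|) := by rw [hΦ.map_abs]
    _ ≤ ENNReal.ofReal (Φ (|J| ^ (1 / p))) :=
        ENNReal.ofReal_le_ofReal (hΦ.monotoneOn (abs_nonneg y) ((abs_nonneg y).trans hyJ) hyJ)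
    _ ≤ ∫⁻ t, ENNReal.ofReal (Φ (|S.indicator (fun t => g t ^ p) t| ^ (1 / p))) ∂ν :=
        ofReal_map_integral_le_lintegral_of_convexOn hΛ (fun _ => hΦ.2.2.2.1 _)
          (hg.integrable_indicator hS)
    _ = ∫⁻ t in S, ENNReal.ofReal (Φ (g t)) ∂ν := by
        simp only [hΛind, lintegral_indicator hS]

lemma ofReal_le_mul_setLIntegral {α : Type*} [MeasurableSpace α] {ν : Measure α}
    [IsZeroOrProbabilityMeasure ν] {p : ℝ} (hΦ : IsYoung Φ) (hsub : Submult Φ) (hp : 0 < p)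
    (hΛ : ConvexOn ℝ univ fun t => Φ (|t| ^ (1 / p))) {S : Set α} (hS : MeasurableSet S)
    {g : α → ℝ} (hg0 : ∀ t ∈ S, 0 ≤ g t) (hg : IntegrableOn (fun t => g t ^ p) S ν) {m c y : ℝ}
    (hm : 0 ≤ m) (hc : 0 ≤ c)
    (hy : ‖y‖ₑ ≤ ENNReal.ofReal (m * c) * (∫⁻ t in S, ENNReal.ofReal (g t) ^ p ∂ν) ^ (1 / p)) :
    ENNReal.ofReal (Φ y) ≤ ENNReal.ofReal (Φ m) *
      (ENNReal.ofReal (Φ c) * ∫⁻ t in S, ENNReal.ofReal (Φ (g t)) ∂ν) := by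
  have hmc : 0 ≤ m * c := mul_nonneg hm hc
  have hΦ0 : ∀ t, 0 ≤ Φ t := hΦ.2.2.2.1
  have hint : IntegrableOn (fun t => (m * c * g t) ^ p) S ν :=
    IntegrableOn.congr_fun (hg.const_mul ((m * c) ^ p))
      (fun t ht => (Real.mul_rpow hmc (hg0 t ht)).symm) hS
  have hnorm : ‖y‖ₑ ≤ (∫⁻ t in S, ENNReal.ofReal (m * c * g t) ^ p ∂ν) ^ (1 / p) := by
    simpa only [ENNReal.ofReal_mul hmc, ENNReal.mul_rpow_of_nonneg _ _ hp.le,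
      lintegral_const_mul' _ _ (ENNReal.rpow_ne_top_of_nonneg hp.le ENNReal.ofReal_ne_top),
      ENNReal.mul_rpow_of_nonneg _ _ (one_div_nonneg.2 hp.le), ← ENNReal.rpow_mul,
      mul_one_div_cancel hp.ne', ENNReal.rpow_one] using hy
  have hsplit : ∀ t ∈ S, Φ (m * c * g t) ≤ Φ m * Φ c * Φ (g t) := fun t ht =>
    (hsub _ _ hmc (hg0 t ht)).trans (mul_le_mul_of_nonneg_right (hsub _ _ hm hc) (hΦ0 _))
  calc ENNReal.ofReal (Φ y)
      ≤ ∫⁻ t in S, ENNReal.ofReal (Φ (m * c * g t)) ∂ν :=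
        hΦ.ofReal_le_setLIntegral hp hΛ hS (fun t ht => mul_nonneg hmc (hg0 t ht)) hint hnorm
    _ ≤ ∫⁻ t in S, ENNReal.ofReal (Φ m * Φ c) * ENNReal.ofReal (Φ (g t)) ∂ν :=
        setLIntegral_mono' hS fun t ht => by
          rw [← ENNReal.ofReal_mul (mul_nonneg (hΦ0 m) (hΦ0 c))]
          exact ENNReal.ofReal_le_ofReal (hsplit t ht)
    _ = ENNReal.ofReal (Φ m) * (ENNReal.ofReal (Φ c) * ∫⁻ t in S, ENNReal.ofReal (Φ (g t)) ∂ν) := by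
        rw [lintegral_const_mul' _ _ ENNReal.ofReal_ne_top, ENNReal.ofReal_mul (hΦ0 m), mul_assoc]

end IsYoung

section Triangle

variable {α : Type*} [LinearOrder α] [TopologicalSpace α] [MeasurableSpace α]

lemma setLIntegral_Ioo_mul_setLIntegral_Ioo_swap [OrderClosedTopology α]
    [SecondCountableTopology α] [OpensMeasurableSpace α] {M ν : Measure α} [SFinite M] [SFinite ν]
    {g h : α → ℝ≥0∞} (hg : Measurable g) (hh : Measurable h) (a b : α) :
    ∫⁻ x in Ioo a b, g x * ∫⁻ t in Ioo x b, h t ∂ν ∂M =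
      ∫⁻ t in Ioo a b, h t * ∫⁻ x in Ioo a t, g x ∂M ∂ν := by
  set K : α → α → ℝ≥0∞ := fun x t =>
    {q : α × α | q.1 < q.2}.indicator (fun q => g q.1 * h q.2) (x, t)
  have hK : Measurable (Function.uncurry K) :=
    ((hg.comp measurable_fst).mul (hh.comp measurable_snd)).indicator
      (measurableSet_lt measurable_fst measurable_snd)
  have hinner : ∀ x ∈ Ioo a b, g x * ∫⁻ t in Ioo x b, h t ∂ν = ∫⁻ t in Ioo a b, K x t ∂ν := by
    intro x hx
    have hset : Ioi x ∩ Ioo a b = Ioo x b := by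
      ext t; exact ⟨fun ht => ⟨ht.1, ht.2.2⟩, fun ht => ⟨ht.1, hx.1.trans ht.1, ht.2⟩⟩
    rw [← hset, ← lintegral_const_mul _ hh, ← Measure.restrict_restrict measurableSet_Ioi,
      ← lintegral_indicator measurableSet_Ioi]
    rfl
  have houter : ∀ t ∈ Ioo a b, h t * ∫⁻ x in Ioo a t, g x ∂M = ∫⁻ x in Ioo a b, K x t ∂M := by
    intro t ht
    have hset : Iio t ∩ Ioo a b = Ioo a t := by
      ext x; exact ⟨fun hx => ⟨hx.2.1, hx.1⟩, fun hx => ⟨hx.2, hx.1, hx.2.trans ht.2⟩⟩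
    rw [← hset, mul_comm, ← lintegral_mul_const _ hg, ← Measure.restrict_restrict measurableSet_Iio,
      ← lintegral_indicator measurableSet_Iio]
    rfl
  rw [setLIntegral_congr_fun measurableSet_Ioo hinner,
    setLIntegral_congr_fun measurableSet_Ioo houter]
  exact lintegral_lintegral_swap hK.aemeasurable

lemma setLIntegral_measure_Icc_mul_setLIntegral_Ioo_le [OrderTopology α]
    [SecondCountableTopology α] [BorelSpace α] {M ν : Measure α} [M.InnerRegularCompactLTTop]
    [SFinite M] [SFinite ν] (a b : α) :
    ∫⁻ x in Ioo a b, M (Icc a x) ^ (-(1 / 2) : ℝ) *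
      ∫⁻ t in Ioo x b, M (Icc a t) ^ (-(1 / 2) : ℝ) ∂ν ∂M ≤ 2 * ν (Ioo a b) := by
  have hmeas : Measurable fun x => M (Icc a x) ^ (-(1 / 2) : ℝ) :=
    (Monotone.measurable fun x y hxy => measure_mono (Icc_subset_Icc_right hxy)).pow_const _
  rw [setLIntegral_Ioo_mul_setLIntegral_Ioo_swap hmeas hmeas]
  have hbound : ∀ t ∈ Ioo a b, M (Icc a t) ^ (-(1 / 2) : ℝ) *
      ∫⁻ x in Ioo a t, M (Icc a x) ^ (-(1 / 2) : ℝ) ∂M ≤ 2 := fun t _ => by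
    calc M (Icc a t) ^ (-(1 / 2) : ℝ) * ∫⁻ x in Ioo a t, M (Icc a x) ^ (-(1 / 2) : ℝ) ∂M
        ≤ M (Icc a t) ^ (-(1 / 2) : ℝ) * (2 * M (Icc a t) ^ (1 / 2 : ℝ)) := by
          gcongr
          refine (lintegral_mono_set Ioo_subset_Icc_self).trans <|
            (setLIntegral_measure_Icc_left_rpow_neg_le a t one_half_pos one_half_lt_one).trans_eq ?_
          norm_num
      _ = 2 * ((M (Icc a t) ^ (1 / 2 : ℝ))⁻¹ * M (Icc a t) ^ (1 / 2 : ℝ)) := by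
          rw [ENNReal.rpow_neg, mul_left_comm]
      _ ≤ 2 := mul_le_of_le_one_right' (ENNReal.inv_mul_le_one _)
  exact (setLIntegral_mono' measurableSet_Ioo hbound).trans_eq (setLIntegral_const _ _)

end Triangle

lemma lintegral_Ioo_ofReal_young_le_one {a b p m : ℝ} {Φ ψ G : ℝ → ℝ} {M ν : Measure ℝ}
    [M.InnerRegularCompactLTTop] [SFinite M] [IsZeroOrProbabilityMeasure ν] (hΦ : IsYoung Φ)
    (hsub : Submult Φ) (hp : 0 < p) (hΛ : ConvexOn ℝ univ fun t => Φ (|t| ^ (1 / p)))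
    (hm : 0 ≤ m) (hΦm : Φ m ≤ 1 / 2) (hψ0 : ∀ t ∈ Ioo a b, 0 ≤ ψ t)
    (hψanti : AntitoneOn ψ (Ioo a b))
    (hΦψ : ∀ t ∈ Ioo a b, ENNReal.ofReal (Φ (ψ t)) ≤ M (Icc a t) ^ (-(1 / 2) : ℝ))
    (hG : ∀ x ∈ Ioo a b, ‖G x‖ₑ ≤ ENNReal.ofReal (m * ψ x) *
      (∫⁻ t in Ioo x b, ENNReal.ofReal (ψ t) ^ p ∂ν) ^ (1 / p)) :
    ∫⁻ x in Ioo a b, ENNReal.ofReal (Φ (G x)) ∂M ≤ 1 := by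
  have hpoint : ∀ x ∈ Ioo a b, ENNReal.ofReal (Φ (G x)) ≤ 2⁻¹ * (M (Icc a x) ^ (-(1 / 2) : ℝ) *
      ∫⁻ t in Ioo x b, M (Icc a t) ^ (-(1 / 2) : ℝ) ∂ν) := by
    intro x hx
    have hsubset : Ioo x b ⊆ Ioo a b := Ioo_subset_Ioo_left hx.1.le
    have hint : IntegrableOn (fun t => ψ t ^ p) (Ioo x b) ν := by
      refine Integrable.of_bound (C := ψ x ^ p)
        ((aemeasurable_restrict_of_antitoneOn measurableSet_Ioo
          (hψanti.mono hsubset)).pow_const p).aestronglyMeasurable ?_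
      filter_upwards [ae_restrict_mem measurableSet_Ioo] with t ht
      have hψt := hψ0 t (hsubset ht)
      rw [Real.norm_of_nonneg (by positivity)]
      exact Real.rpow_le_rpow hψt (hψanti hx (hsubset ht) ht.1.le) hp.le
    refine (hΦ.ofReal_le_mul_setLIntegral hsub hp hΛ measurableSet_Ioo
      (fun t ht => hψ0 t (hsubset ht)) hint hm (hψ0 x hx) (hG x hx)).trans ?_
    have hhalf : ENNReal.ofReal (Φ m) ≤ 2⁻¹ := by
      simpa [ENNReal.ofReal_inv_of_pos] using ENNReal.ofReal_le_ofReal hΦm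
    exact mul_le_mul' hhalf (mul_le_mul' (hΦψ x hx)
      (setLIntegral_mono' measurableSet_Ioo fun t ht => hΦψ t (hsubset ht)))
  calc ∫⁻ x in Ioo a b, ENNReal.ofReal (Φ (G x)) ∂M
      ≤ ∫⁻ x in Ioo a b, 2⁻¹ * (M (Icc a x) ^ (-(1 / 2) : ℝ) *
          ∫⁻ t in Ioo x b, M (Icc a t) ^ (-(1 / 2) : ℝ) ∂ν) ∂M :=
        setLIntegral_mono' measurableSet_Ioo hpoint
    _ = 2⁻¹ * ∫⁻ x in Ioo a b, M (Icc a x) ^ (-(1 / 2) : ℝ) *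
          ∫⁻ t in Ioo x b, M (Icc a t) ^ (-(1 / 2) : ℝ) ∂ν ∂M :=
        lintegral_const_mul' _ _ (by finiteness)
    _ ≤ 2⁻¹ * (2 * 1) := by
        gcongr
        refine (setLIntegral_measure_Icc_mul_setLIntegral_Ioo_le a b).trans ?_
        gcongr
        exact prob_le_one
    _ = 1 := by rw [mul_one, ENNReal.inv_mul_cancel two_ne_zero ENNReal.ofNat_ne_top]

lemma luxNorm_le_ofReal {a b c : ℝ} {Φ μ F : ℝ → ℝ} (hΦ : ∀ t, 0 ≤ Φ t) (hμ : Measurable μ)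
    (hc : 0 < c)
    (h : ∫⁻ x in Ioo a b, ENNReal.ofReal (Φ (F x / c)) ∂weightMeasure μ ≤ 1) :
    luxNorm Φ μ a b F ≤ ENNReal.ofReal c := by
  refine sInf_le ⟨c, hc, rfl, ?_⟩
  rw [setLIntegral_weightMeasure hμ _ measurableSet_Ioo, restrict_Ioo_eq_restrict_Icc] at h
  simpa only [ENNReal.ofReal_mul (hΦ _), mul_comm (ENNReal.ofReal (μ _))] using h

lemma luxNorm_le_of_enorm_le {a b p m : ℝ} {Φ ψ μ F : ℝ → ℝ} {ν : Measure ℝ}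
    [IsZeroOrProbabilityMeasure ν] {A : ℝ≥0∞} (hΦ : IsYoung Φ) (hsub : Submult Φ) (hp : 0 < p)
    (hΛ : ConvexOn ℝ univ fun t => Φ (|t| ^ (1 / p))) (hμ : Measurable μ)
    (hm : 0 < m) (hΦm : Φ m ≤ 1 / 2) (hψ0 : ∀ t ∈ Ioo a b, 0 ≤ ψ t)
    (hψanti : AntitoneOn ψ (Ioo a b))
    (hΦψ : ∀ t ∈ Ioo a b, ENNReal.ofReal (Φ (ψ t)) ≤ wInt μ a t ^ (-(1 / 2) : ℝ))
    (hF : ∀ x ∈ Ioo a b, ‖F x‖ₑ ≤ A * (ENNReal.ofReal (ψ x) *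
      (∫⁻ t in Ioo x b, ENNReal.ofReal (ψ t) ^ p ∂ν) ^ (1 / p))) :
    luxNorm Φ μ a b F ≤ ENNReal.ofReal m⁻¹ * A := by
  refine le_of_forall_gt_imp_ge_of_dense fun k hk => ?_
  rcases eq_or_ne k ⊤ with rfl | hktop
  · exact le_top
  obtain ⟨c, hc, rfl⟩ : ∃ c, 0 < c ∧ ENNReal.ofReal c = k :=
    ⟨k.toReal, ENNReal.toReal_pos (ne_bot_of_gt hk) hktop, ENNReal.ofReal_toReal hktop⟩
  have hA : A ≤ ENNReal.ofReal c * ENNReal.ofReal m := by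
    rw [ENNReal.ofReal_inv_of_pos hm] at hk
    rw [mul_comm]
    exact (ENNReal.inv_mul_le_iff (ENNReal.ofReal_pos.2 hm).ne' ENNReal.ofReal_ne_top).1 hk.le
  refine luxNorm_le_ofReal hΦ.2.2.2.1 hμ hc
    (lintegral_Ioo_ofReal_young_le_one (ν := ν) hΦ hsub hp hΛ hm.le hΦm hψ0 hψanti
      (by simpa only [weightMeasure_Icc] using hΦψ) fun x hx => ?_)
  have hcpos : ENNReal.ofReal c ≠ 0 := (ENNReal.ofReal_pos.2 hc).ne'
  have hdiv : ‖F x / c‖ₑ = (ENNReal.ofReal c)⁻¹ * ‖F x‖ₑ := by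
    rw [div_eq_inv_mul, enorm_mul, Real.enorm_eq_ofReal (inv_nonneg.2 hc.le),
      ENNReal.ofReal_inv_of_pos hc]
  rw [hdiv, ENNReal.inv_mul_le_iff hcpos ENNReal.ofReal_ne_top, ENNReal.ofReal_mul hm.le,
    mul_assoc (ENNReal.ofReal m), ← mul_assoc]
  exact (hF x hx).trans (by gcongr)

/-- The function `t ↦ Φ⁻¹(μ[a,t]^{-1/2})` of the Hardy condition. It is `Φ⁻¹(0)` where `μ[a,t]` is
`0` or `∞`. -/
def hardyProfile (Φinv μ : ℝ → ℝ) (a t : ℝ) : ℝ :=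
  Φinv ((wInt μ a t).toReal ^ (-(1 / 2) : ℝ))

namespace IsYoungInv

variable {Φ Φinv μ : ℝ → ℝ} {a b t : ℝ}

lemma monotoneOn (hinv : IsYoungInv Φ Φinv) (hΦ : MonotoneOn Φ (Ici 0)) :
    MonotoneOn Φinv (Ici 0) := by
  intro s (hs : 0 ≤ s) t (ht : 0 ≤ t) hst
  by_contra! hlt
  have hts := hΦ (hinv.1 t ht) (hinv.1 s hs) hlt.le
  rw [hinv.2.1 s hs, hinv.2.1 t ht] at hts
  exact hlt.ne (by rw [le_antisymm hst hts])

lemma ofReal_map_hardyProfile_le (hinv : IsYoungInv Φ Φinv) :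
    ENNReal.ofReal (Φ (hardyProfile Φinv μ a t)) ≤ wInt μ a t ^ (-(1 / 2) : ℝ) := by
  rw [hardyProfile, hinv.2.1 _ (by positivity), ENNReal.toReal_rpow]
  exact ENNReal.ofReal_toReal_le

lemma wInt_toReal_pos (hinv : IsYoungInv Φ Φinv) (hΦ0 : Φ 0 = 0)
    (ht : 0 < hardyProfile Φinv μ a t) : 0 < (wInt μ a t).toReal := by
  refine ENNReal.toReal_nonneg.lt_of_ne' fun hzero => ht.ne' ?_
  have hinv0 : Φinv 0 = 0 := by simpa [hΦ0] using hinv.2.2 0 le_rfl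
  rw [hardyProfile, hzero, Real.zero_rpow (by norm_num), hinv0]

lemma antitoneOn_hardyProfile (hinv : IsYoungInv Φ Φinv) (hΦ : IsYoung Φ)
    {S : Set ℝ} (hpos : ∀ t ∈ S, 0 < hardyProfile Φinv μ a t) :
    AntitoneOn (hardyProfile Φinv μ a) S := by
  intro x hx t ht hxt
  have hx0 := hinv.wInt_toReal_pos hΦ.2.2.1 (hpos x hx)
  have ht0 := hinv.wInt_toReal_pos hΦ.2.2.1 (hpos t ht)
  refine hinv.monotoneOn hΦ.monotoneOn (Real.rpow_nonneg ht0.le _) (Real.rpow_nonneg hx0.le _) ?_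
  exact Real.rpow_le_rpow_of_nonpos hx0 (ENNReal.toReal_mono (ENNReal.toReal_pos_iff.1 ht0).2.ne
    (lintegral_mono_set (Icc_subset_Icc_right hxt))) (by norm_num)

end IsYoungInv

lemma rpow_half_le_of_inv_sq_mul_le {s T v : ℝ≥0∞} (hs0 : s ≠ 0) (hs : s ≠ ⊤)
    (h : (s ^ 2)⁻¹ * v ≤ T) : v ^ (1 / 2 : ℝ) ≤ T ^ (1 / 2 : ℝ) * s := by
  rw [ENNReal.inv_mul_le_iff (by simpa) (by finiteness)] at h
  calc v ^ (1 / 2 : ℝ) ≤ (s ^ 2 * T) ^ (1 / 2 : ℝ) := by gcongr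
    _ = T ^ (1 / 2 : ℝ) * s := by
      rw [ENNReal.mul_rpow_of_nonneg _ _ one_half_pos.le, ← ENNReal.rpow_natCast_mul]
      norm_num [mul_comm]

section HardyCondition

variable {a b p q x : ℝ} {f w ψ : ℝ → ℝ} {T : ℝ≥0∞}

lemma pos_of_hardyCondition (hw : IsWeight w a b) (hq : 0 ≤ q) (hT : T ≠ ⊤) (hx : x ∈ Ioo a b)
    {s : ℝ} (hs : (ENNReal.ofReal s ^ 2)⁻¹ * wInt (fun t => w t ^ (1 - q)) x b ^ (1 / q) ≤ T) :
    0 < s := by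
  have hV : wInt (fun t => w t ^ (1 - q)) x b ^ (1 / q) ≠ 0 := by
    simp [ENNReal.rpow_eq_zero_iff, wInt_ne_zero hw hx.1.le hx.2 le_rfl, hq]
  contrapose! hT
  rwa [ENNReal.ofReal_of_nonpos hT, zero_pow two_ne_zero, ENNReal.inv_zero, ENNReal.top_mul hV,
    top_le_iff] at hs

lemma enorm_intervalIntegral_le_of_hardyCondition (hpq : p.HolderConjugate q) (hf : Measurable f)
    (hw : IsWeight w a b) (hfin : wInt (fun t => |f t| ^ p * w t) a b ≠ ⊤) (hT : T ≠ ⊤)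
    (hTψ : ∀ t ∈ Ioo a b,
      (ENNReal.ofReal (ψ t) ^ 2)⁻¹ * wInt (fun s => w s ^ (1 - q)) t b ^ (1 / q) ≤ T)
    (hx : x ∈ Ioo a b) :
    ‖∫ t in x..b, f t‖ₑ ≤ 2 * T * _root_.lpNorm w p a b f * (ENNReal.ofReal (ψ x) *
      (∫⁻ t in Ioo x b, ENNReal.ofReal (ψ t) ^ p
        ∂ProbabilityTheory.cond (weightMeasure fun t => |f t| ^ p * w t) (Icc a b)) ^ (1 / p)) := by
  have hτ : (T ^ (1 / 2 : ℝ)) ^ 2 = T := by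
    rw [← ENNReal.rpow_mul_natCast]
    norm_num
  have hV : ∀ t ∈ Ico x b, wInt (fun s => w s ^ (1 - q)) t b ^ (1 / (2 * q)) ≤
      T ^ (1 / 2 : ℝ) * ENNReal.ofReal (ψ t) := fun t ht => by
    have htab : t ∈ Ioo a b := ⟨hx.1.trans_le ht.1, ht.2⟩
    have hψt : 0 < ψ t := pos_of_hardyCondition hw hpq.symm.nonneg hT htab (hTψ t htab)
    rw [← one_div_mul_one_div_rev, ENNReal.rpow_mul]
    exact rpow_half_le_of_inv_sq_mul_le (ENNReal.ofReal_pos.2 hψt).ne' ENNReal.ofReal_ne_top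
      (hTψ t htab)
  refine (enorm_intervalIntegral_le_setLIntegral_Ioo hx.2.le f).trans <|
    (lintegral_Ioo_enorm_le_of_wInt_le hpq hf hw hx.1.le hx.2 (by finiteness) hV).trans_eq ?_
  rw [← weightMeasure_Icc] at hfin
  rw [setLIntegral_eq_mul_setLIntegral_cond hfin measurableSet_Ioo
      (Ioo_subset_Icc_self.trans (Icc_subset_Icc_left hx.1.le)),
    ENNReal.mul_rpow_of_nonneg _ _ hpq.one_div_nonneg, weightMeasure_Icc, hτ, _root_.lpNorm, wInt]
  ring

end HardyCondition

/-- Orlicz–Hardy inequality for `x ↦ ∫ₓ^b f`: if `T < ∞` then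
`‖∫_•^b f‖_{L_μ^Φ[a,b]} ≤ C₀(Φ) T ‖f‖_{L_w^p[a,b]}`. -/
theorem orlicz_hardy_right
    (a b : ℝ) (hab : a < b) (p pc : ℝ) (hp : 1 < p) (hpc : pc = p / (p - 1))
    (Φ Φinv μ w : ℝ → ℝ)
    (hΦ : IsYoung Φ) (hsub : Submult Φ) (hinv : IsYoungInv Φ Φinv)
    (hΛ : ConvexOn ℝ Set.univ (fun t => Φ (|t| ^ (1 / p))))
    (hμ : IsWeight μ a b) (hw : IsWeight w a b)
    (T : ℝ≥0∞)
    (hT : T = ⨆ x ∈ Set.Ioo a b,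
      ((ENNReal.ofReal (Φinv ((wInt μ a x).toReal ^ (-(1/2) : ℝ)))) ^ 2)⁻¹ *
        (∫⁻ t in Set.Icc x b, ENNReal.ofReal (w t ^ (1 - pc))) ^ (1 / pc))
    (hTfin : T < ⊤) :
    ∀ f : ℝ → ℝ, Measurable f →
      (∫⁻ t in Set.Icc a b, ENNReal.ofReal (|f t| ^ p * w t)) < ⊤ →
      luxNorm Φ μ a b (fun x => ∫ t in x..b, f t)
        ≤ ENNReal.ofReal (2 * (Φinv (1/2))⁻¹) * T * lpNorm w p a b f := by
  intro f hf hfin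
  have hpq : p.HolderConjugate pc := (Real.holderConjugate_iff_eq_conjExponent hp).2 hpc
  have hTψ : ∀ x ∈ Ioo a b, (ENNReal.ofReal (hardyProfile Φinv μ a x) ^ 2)⁻¹ *
      wInt (fun t => w t ^ (1 - pc)) x b ^ (1 / pc) ≤ T :=
    fun x hx => hT ▸ le_iSup₂_of_le x hx le_rfl
  have hψ : ∀ x ∈ Ioo a b, 0 < hardyProfile Φinv μ a x := fun x hx =>
    pos_of_hardyCondition hw hpq.symm.nonneg hTfin.ne hx (hTψ x hx)
  have hm : Φ (Φinv (1 / 2)) = 1 / 2 := hinv.2.1 _ one_half_pos.le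
  have hm0 : 0 < Φinv (1 / 2) := (hinv.1 _ one_half_pos.le).lt_of_ne' fun h0 => by
    norm_num [h0, hΦ.2.2.1] at hm
  calc luxNorm Φ μ a b (fun x => ∫ t in x..b, f t)
      ≤ ENNReal.ofReal (Φinv (1 / 2))⁻¹ * (2 * T * lpNorm w p a b f) :=
        luxNorm_le_of_enorm_le hΦ hsub hpq.pos hΛ hμ.1 hm0 hm.le (fun x hx => (hψ x hx).le)
          (hinv.antitoneOn_hardyProfile hΦ hψ) (fun _ _ => hinv.ofReal_map_hardyProfile_le)
          fun x hx => enorm_intervalIntegral_le_of_hardyCondition hpq hf hw hfin.ne hTfin.ne hTψ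
            hx
    _ = ENNReal.ofReal (2 * (Φinv (1/2))⁻¹) * T * lpNorm w p a b f := by
        rw [ENNReal.ofReal_mul two_pos.le, ENNReal.ofReal_ofNat]
        ring
end
end
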